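/- Let p = 3. Under the null hypothesis of uniformity, i.e., under P_0^{(n)} = U_3^{⊗n} on (S^2)^n, each of the test statistics T_+^{(n)}(x) := √n (3 λ̂_{n1}(x) − 1) and T_−^{(n)}(x) := −√n (3 λ̂_{n3}(x) − 1) converges in distribution, as n → ∞, to the probability distribution on ℝ with cumulative distribution function ℓ ↦ { Φ(√5 ℓ) + Φ(√5 ℓ / 2) + 3 Φ''(√5 ℓ / 2) − 1 } · 1[ℓ > 0], where Φ is the standard normal cumulative distribution function and Φ''(t) = −t e^{−t²/2}/√(2π) is its second derivative. -/

import Mathlib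

open MeasureTheory ProbabilityTheory Filter Matrix Real
open scoped ENNReal NNReal Topology

noncomputable section

/-- The sample covariance matrix `S_n(x) = (1/n) Σ_i x_i x_i'`. -/
def Sn (p n : ℕ) (x : Fin n → (Fin p → ℝ)) : Matrix (Fin p) (Fin p) ℝ :=
  Matrix.of fun a b => (1 / (n:ℝ)) * ∑ i, x i a * x i b

/-- Largest eigenvalue of a (symmetric) real matrix, via the Rayleigh quotient. -/
def maxEig {p : ℕ} (A : Matrix (Fin p) (Fin p) ℝ) : ℝ :=
  sSup {r | ∃ v : Fin p → ℝ, (∑ i, v i ^ 2) = 1 ∧ r = v ⬝ᵥ A.mulVec v}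

/-- Smallest eigenvalue of a (symmetric) real matrix, via the Rayleigh quotient. -/
def minEig {p : ℕ} (A : Matrix (Fin p) (Fin p) ℝ) : ℝ :=
  sInf {r | ∃ v : Fin p → ℝ, (∑ i, v i ^ 2) = 1 ∧ r = v ⬝ᵥ A.mulVec v}

/-- The standard normal cumulative distribution function `Φ`. -/
def stdNormalCDF (t : ℝ) : ℝ :=
  ∫ u in Set.Iic t, (Real.sqrt (2 * Real.pi))⁻¹ * Real.exp (-u ^ 2 / 2)

/-- The second derivative `Φ''(t) = -t e^{-t²/2}/√(2π)` of the standard normal cdf. -/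
def stdNormalCDF'' (t : ℝ) : ℝ := -t * Real.exp (-t ^ 2 / 2) / Real.sqrt (2 * Real.pi)

/-- The traceless symmetric matrix with coordinates `y` in an orthogonal basis. -/
def cartanMatrix (y : EuclideanSpace ℝ (Fin 5)) : Matrix (Fin 3) (Fin 3) ℝ :=
  !![√3 * y 3 - y 4, √3 * y 0, √3 * y 1;
     √3 * y 0, -(√3 * y 3) - y 4, √3 * y 2;
     √3 * y 1, √3 * y 2, 2 * y 4]

/-- Cartan's isoparametric cubic on `ℝ⁵`; it is half the determinant of `cartanMatrix`. -/
def cartanCubic (y : EuclideanSpace ℝ (Fin 5)) : ℝ :=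
  y 4 ^ 3 - 3 * y 4 * y 3 ^ 2 - 3 * y 4 * y 0 ^ 2 + 3 / 2 * y 4 * (y 1 ^ 2 + y 2 ^ 2)
    + 3 * √3 / 2 * y 3 * (y 1 ^ 2 - y 2 ^ 2) + 3 * √3 * y 0 * y 1 * y 2

lemma norm_sq_eq_fin_five (y : EuclideanSpace ℝ (Fin 5)) :
    ‖y‖ ^ 2 = y 0 ^ 2 + y 1 ^ 2 + y 2 ^ 2 + y 3 ^ 2 + y 4 ^ 2 := by
  simp [EuclideanSpace.norm_sq_eq, Fin.sum_univ_five]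

lemma posSemidef_fin_three_iff {N : Matrix (Fin 3) (Fin 3) ℝ} (hN : N.IsHermitian) :
    N.PosSemidef ↔ 0 ≤ N.trace ∧
      0 ≤ (N 0 0 * N 1 1 - N 0 1 * N 1 0) + (N 0 0 * N 2 2 - N 0 2 * N 2 0)
        + (N 1 1 * N 2 2 - N 1 2 * N 2 1) ∧ 0 ≤ N.det := by
  constructor
  · intro h
    refine ⟨h.trace_nonneg, ?_, h.det_nonneg⟩
    have key (f : Fin 2 → Fin 3) :
        0 ≤ N (f 0) (f 0) * N (f 1) (f 1) - N (f 0) (f 1) * N (f 1) (f 0) := by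
      have := (h.submatrix f).det_nonneg
      rwa [det_fin_two] at this
    have h01 := key ![0, 1]
    have h02 := key ![0, 2]
    have h12 := key ![1, 2]
    simp at h01 h02 h12
    linarith
  · rintro ⟨h1, h2, h3⟩
    rw [hN.posSemidef_iff_eigenvalues_nonneg]
    intro i
    set l := hN.eigenvalues i with hl
    have hdet : (N - l • (1 : Matrix (Fin 3) (Fin 3) ℝ)).det = 0 := by
      rw [← Matrix.exists_mulVec_eq_zero_iff]
      refine ⟨⇑(hN.eigenvectorBasis i), ?_, ?_⟩
      · intro h0
        apply hN.eigenvectorBasis.orthonormal.ne_zero i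
        ext j
        exact congrFun h0 j
      · rw [sub_mulVec, hN.mulVec_eigenvectorBasis, smul_mulVec, one_mulVec, sub_self]
    by_contra! hneg
    simp only [det_fin_three, trace_fin_three] at hdet h1 h3
    simp at hdet hneg
    have hl3 : l ^ 3 < 0 := by
      have : 0 < (-l) ^ 3 := by have : 0 < -l := by linarith
                                positivity
      nlinarith
    nlinarith [mul_nonneg h1 (sq_nonneg l), mul_nonneg h2 (neg_nonneg.2 hneg.le)]

lemma posSemidef_iff_forall_unit {p : ℕ} {N : Matrix (Fin p) (Fin p) ℝ} (hN : N.IsHermitian) :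
    N.PosSemidef ↔ ∀ v : Fin p → ℝ, ∑ i, v i ^ 2 = 1 → 0 ≤ v ⬝ᵥ N *ᵥ v := by
  constructor
  · intro h v _
    simpa using h.dotProduct_mulVec_nonneg v
  · intro h
    refine PosSemidef.of_dotProduct_mulVec_nonneg hN fun v ↦ ?_
    rcases eq_or_ne v 0 with rfl | hv
    · simp
    have hs : 0 < ∑ i, v i ^ 2 := by
      obtain ⟨j, hj⟩ := Function.ne_iff.1 hv
      exact Finset.sum_pos' (fun i _ ↦ sq_nonneg _) ⟨j, Finset.mem_univ _, by simpa using sq_pos_of_ne_zero hj⟩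
    set s := ∑ i, v i ^ 2
    have := h ((√s)⁻¹ • v) (by
      simp only [Pi.smul_apply, smul_eq_mul, mul_pow, ← Finset.mul_sum, inv_pow,
        Real.sq_sqrt hs.le]
      exact inv_mul_cancel₀ hs.ne')
    rw [mulVec_smul, smul_dotProduct, dotProduct_smul, smul_smul, smul_eq_mul] at this
    simpa using nonneg_of_mul_nonneg_right this (by positivity)

lemma forall_cartanMatrix_le_iff (y : EuclideanSpace ℝ (Fin 5)) (a : ℝ) :
    (∀ v : Fin 3 → ℝ, ∑ i, v i ^ 2 = 1 → v ⬝ᵥ cartanMatrix y *ᵥ v ≤ a) ↔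
      0 ≤ a ∧ ‖y‖ ^ 2 ≤ a ^ 2 ∧ 2 * cartanCubic y ≤ a ^ 3 - 3 * ‖y‖ ^ 2 * a := by
  have h3 : √3 ^ 2 = 3 := Real.sq_sqrt (by norm_num)
  have hH : (a • (1 : Matrix (Fin 3) (Fin 3) ℝ) - cartanMatrix y).IsHermitian := by
    ext i j
    fin_cases i <;> fin_cases j <;> simp [cartanMatrix]
  have e1 : (∀ v : Fin 3 → ℝ, ∑ i, v i ^ 2 = 1 → v ⬝ᵥ cartanMatrix y *ᵥ v ≤ a) ↔
      (a • (1 : Matrix (Fin 3) (Fin 3) ℝ) - cartanMatrix y).PosSemidef := by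
    rw [posSemidef_iff_forall_unit hH]
    refine forall₂_congr fun v hv ↦ ?_
    have : v ⬝ᵥ v = 1 := by rw [← hv]; simp [dotProduct, sq]
    rw [sub_mulVec, smul_mulVec, one_mulVec, dotProduct_sub, dotProduct_smul, this]
    simp
  rw [e1, posSemidef_fin_three_iff hH, norm_sq_eq_fin_five]
  refine and_congr ?_ (and_congr ?_ ?_)
  · simp only [trace_fin_three, cartanMatrix]
    simp
    constructor <;> intro h <;> linarith
  · simp [cartanMatrix]
    constructor <;> intro h <;> nlinarith
  · have : (a • (1 : Matrix (Fin 3) (Fin 3) ℝ) - cartanMatrix y).det =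
        a ^ 3 - 3 * (y 0 ^ 2 + y 1 ^ 2 + y 2 ^ 2 + y 3 ^ 2 + y 4 ^ 2) * a - 2 * cartanCubic y := by
      simp only [det_fin_three, cartanMatrix, cartanCubic]
      simp
      have h33 : √3 ^ 3 = 3 * √3 := by rw [pow_succ, h3]
      ring_nf
      simp only [h3, h33]
      ring
    rw [this]
    constructor <;> intro h <;> linarith

/-- The quadratic map sending a point `x` of the unit sphere to the coordinates of the traceless
matrix `√5 (3 x xᵀ - 1)`, cf. `cartanMatrix`. -/
def sphereFeature (x : Fin 3 → ℝ) : EuclideanSpace ℝ (Fin 5) :=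
  !₂[√15 * (x 0 * x 1), √15 * (x 0 * x 2), √15 * (x 1 * x 2), √15 / 2 * (x 0 ^ 2 - x 1 ^ 2),
    √5 / 2 * (2 * x 2 ^ 2 - x 0 ^ 2 - x 1 ^ 2)]

lemma continuous_sphereFeature : Continuous sphereFeature := by
  unfold sphereFeature
  refine (PiLp.continuous_toLp 2 _).comp (continuous_pi fun i ↦ ?_)
  fin_cases i <;> simp <;> fun_prop

lemma isCompact_sum_sq_eq_one : IsCompact {x : Fin 3 → ℝ | ∑ a, x a ^ 2 = 1} := by
  refine Metric.isCompact_of_isClosed_isBounded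
    (isClosed_eq (by fun_prop) continuous_const) ?_
  refine (Metric.isBounded_closedBall (x := (0 : Fin 3 → ℝ)) (r := 1)).subset fun x hx ↦ ?_
  rw [mem_closedBall_zero_iff, pi_norm_le_iff_of_nonneg zero_le_one]
  intro i
  rw [Real.norm_eq_abs, ← sq_le_one_iff_abs_le_one]
  have : x i ^ 2 ≤ ∑ a, x a ^ 2 :=
    Finset.single_le_sum (f := fun a ↦ x a ^ 2) (fun _ _ ↦ sq_nonneg _) (Finset.mem_univ i)
  exact this.trans hx.le

section Moments

variable {U : Measure (Fin 3 → ℝ)}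

lemma integrable_of_continuous_of_sphere [IsProbabilityMeasure U]
    (hU : U {x : Fin 3 → ℝ | ∑ a, x a ^ 2 = 1}ᶜ = 0) {g : (Fin 3 → ℝ) → ℝ} (hg : Continuous g) :
    Integrable g U := by
  have := hg.continuousOn.integrableOn_compact (μ := U) isCompact_sum_sq_eq_one
  rwa [IntegrableOn, Measure.restrict_eq_self_of_ae_mem] at this
  exact measure_eq_zero_iff_ae_notMem.1 hU |>.mono fun x hx ↦ by simpa using hx

/-- The mixed moment of order `(i, j, k)` of a measure on `ℝ³`. -/
def mixedMoment (U : Measure (Fin 3 → ℝ)) (e : Fin 3 → ℕ) : ℝ :=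
  ∫ x, x 0 ^ e 0 * x 1 ^ e 1 * x 2 ^ e 2 ∂U

lemma integral_comp_mulVec
    (hrot : ∀ O : Matrix (Fin 3) (Fin 3) ℝ, O * Oᵀ = 1 → Measure.map (fun x ↦ O *ᵥ x) U = U)
    {O : Matrix (Fin 3) (Fin 3) ℝ} (hO : O * Oᵀ = 1) {g : (Fin 3 → ℝ) → ℝ} (hg : Continuous g) :
    ∫ x, g (O *ᵥ x) ∂U = ∫ x, g x ∂U := by
  conv_rhs => rw [← hrot O hO]
  rw [integral_map (by fun_prop) hg.aestronglyMeasurable]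

lemma mixedMoment_eq_zero
    (hrot : ∀ O : Matrix (Fin 3) (Fin 3) ℝ, O * Oᵀ = 1 → Measure.map (fun x ↦ O *ᵥ x) U = U)
    {e : Fin 3 → ℕ} (he : ∃ a, Odd (e a)) : mixedMoment U e = 0 := by
  obtain ⟨a, ha⟩ := he
  have hO : diagonal (Function.update (1 : Fin 3 → ℝ) a (-1)) *
      (diagonal (Function.update (1 : Fin 3 → ℝ) a (-1)))ᵀ = 1 := by
    ext i j
    fin_cases a <;> fin_cases i <;> fin_cases j <;> simp [diagonal, Matrix.mul_apply]
  have := integral_comp_mulVec hrot hO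
    (g := fun x ↦ x 0 ^ e 0 * x 1 ^ e 1 * x 2 ^ e 2) (by fun_prop)
  simp only [mulVec_diagonal] at this
  have h2 : ∫ x, -(x 0 ^ e 0 * x 1 ^ e 1 * x 2 ^ e 2) ∂U = mixedMoment U e := by
    rw [mixedMoment, ← this]
    congr 1
    ext x
    fin_cases a <;> simp at ha <;> simp [ha.neg_pow]
  rw [integral_neg] at h2
  change -mixedMoment U e = _ at h2
  linarith

lemma mixedMoment_comp_perm
    (hrot : ∀ O : Matrix (Fin 3) (Fin 3) ℝ, O * Oᵀ = 1 → Measure.map (fun x ↦ O *ᵥ x) U = U)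
    (e : Fin 3 → ℕ) (s : Equiv.Perm (Fin 3)) : mixedMoment U (e ∘ s) = mixedMoment U e := by
  have hO : (s⁻¹ : Equiv.Perm (Fin 3)).permMatrix ℝ * ((s⁻¹ : Equiv.Perm (Fin 3)).permMatrix ℝ)ᵀ = 1 := by
    rw [Matrix.transpose_permMatrix, ← Matrix.permMatrix_mul]
    simp
  have := integral_comp_mulVec hrot hO
    (g := fun x ↦ x 0 ^ e 0 * x 1 ^ e 1 * x 2 ^ e 2) (by fun_prop)
  rw [mixedMoment, mixedMoment, ← this]
  congr 1
  ext x
  have h1 := Fin.prod_univ_three fun i ↦ x i ^ e (s i)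
  have h2 := Fin.prod_univ_three fun i ↦ x (s⁻¹ i) ^ e i
  simp only [Matrix.permMatrix_mulVec, Function.comp]
  rw [← h1, ← h2, ← Equiv.prod_comp s fun i ↦ x (s⁻¹ i) ^ e i]
  simp

lemma mixedMoment_values [IsProbabilityMeasure U]
    (hU : U {x : Fin 3 → ℝ | ∑ a, x a ^ 2 = 1}ᶜ = 0)
    (hrot : ∀ O : Matrix (Fin 3) (Fin 3) ℝ, O * Oᵀ = 1 → Measure.map (fun x ↦ O *ᵥ x) U = U) :
    mixedMoment U ![4, 0, 0] = 1 / 5 ∧ mixedMoment U ![2, 2, 0] = 1 / 15 := by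
  have hi {g : (Fin 3 → ℝ) → ℝ} (hg : Continuous g) := integrable_of_continuous_of_sphere hU hg
  have hsph : ∀ᵐ x ∂U, x 0 ^ 2 + x 1 ^ 2 + x 2 ^ 2 = 1 :=
    measure_eq_zero_iff_ae_notMem.1 hU |>.mono fun x hx ↦ by
      simpa [Fin.sum_univ_three] using hx
  have p1 : mixedMoment U ![0, 4, 0] = mixedMoment U ![4, 0, 0] := by
    rw [← mixedMoment_comp_perm hrot _ (Equiv.swap 0 1)]; congr 1; ext i; fin_cases i <;> rfl
  have p2 : mixedMoment U ![0, 0, 4] = mixedMoment U ![4, 0, 0] := by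
    rw [← mixedMoment_comp_perm hrot _ (Equiv.swap 0 2)]; congr 1; ext i; fin_cases i <;> rfl
  have p3 : mixedMoment U ![2, 0, 2] = mixedMoment U ![2, 2, 0] := by
    rw [← mixedMoment_comp_perm hrot _ (Equiv.swap 1 2)]; congr 1; ext i; fin_cases i <;> rfl
  have p4 : mixedMoment U ![0, 2, 2] = mixedMoment U ![2, 2, 0] := by
    rw [← mixedMoment_comp_perm hrot _ (Equiv.swap 0 2)]; congr 1; ext i; fin_cases i <;> rfl
  have hsum : mixedMoment U ![4, 0, 0] + mixedMoment U ![0, 4, 0] + mixedMoment U ![0, 0, 4]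
      + 2 * mixedMoment U ![2, 2, 0] + 2 * mixedMoment U ![2, 0, 2]
      + 2 * mixedMoment U ![0, 2, 2] = 1 := by
    have : ∫ x, ((x 0 ^ 2 + x 1 ^ 2 + x 2 ^ 2) ^ 2 : ℝ) ∂U = 1 := by
      rw [integral_congr_ae (g := fun _ ↦ (1 : ℝ))
        (hsph.mono fun x hx ↦ by simp only [hx, one_pow])]
      simp
    rw [← this]
    simp only [mixedMoment]
    simp only [← integral_const_mul]
    simp only [cons_val, pow_zero, mul_one, one_mul]
    rw [← integral_add, ← integral_add, ← integral_add, ← integral_add, ← integral_add]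
    · congr 1; ext x; ring
    all_goals exact hi (by fun_prop)
  have hrt : 4 * mixedMoment U ![4, 0, 0] = 2 * mixedMoment U ![4, 0, 0]
      + 6 * mixedMoment U ![2, 2, 0] := by
    have h2 : √2 * √2 = 2 := Real.mul_self_sqrt (by norm_num)
    have h2i : (√2)⁻¹ * (√2)⁻¹ = 1 / 2 := by rw [← mul_inv, h2]; norm_num
    have hO : (!![(√2)⁻¹, (√2)⁻¹, 0; (√2)⁻¹, -(√2)⁻¹, 0; 0, 0, 1] : Matrix (Fin 3) (Fin 3) ℝ) *
        (!![(√2)⁻¹, (√2)⁻¹, 0; (√2)⁻¹, -(√2)⁻¹, 0; 0, 0, 1])ᵀ = 1 := by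
      ext i j
      fin_cases i <;> fin_cases j <;> simp [Matrix.mul_apply, Fin.sum_univ_three] <;> linarith
    have h31 := mixedMoment_eq_zero hrot (e := ![3, 1, 0]) ⟨0, by decide⟩
    have h13 := mixedMoment_eq_zero hrot (e := ![1, 3, 0]) ⟨0, by decide⟩
    have := integral_comp_mulVec hrot hO (g := fun x ↦ x 0 ^ 4) (by fun_prop)
    have h4 : mixedMoment U ![4, 0, 0] = ∫ x, x 0 ^ 4 ∂U := by simp [mixedMoment]
    have e1 : 4 * mixedMoment U ![4, 0, 0] = mixedMoment U ![4, 0, 0] + mixedMoment U ![0, 4, 0]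
        + 6 * mixedMoment U ![2, 2, 0] + 4 * mixedMoment U ![3, 1, 0]
        + 4 * mixedMoment U ![1, 3, 0] := by
      conv_lhs => rw [h4, ← this]
      simp only [mixedMoment]
      simp only [← integral_const_mul]
      simp only [cons_val, pow_zero, mul_one, one_mul]
      rw [← integral_add, ← integral_add, ← integral_add, ← integral_add]
      · congr 1; ext x
        simp [mulVec, dotProduct, Fin.sum_univ_three]
        have : ((√2)⁻¹ * x 0 + (√2)⁻¹ * x 1) ^ 4
          = ((√2)⁻¹ * (√2)⁻¹) ^ 2 * (x 0 + x 1) ^ 4 := by ring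
        rw [this, h2i]; ring
      all_goals exact hi (by fun_prop)
    rw [e1, h31, h13, p1]; ring
  constructor <;> linarith

lemma inner_sphereFeature (x : Fin 3 → ℝ) (t : EuclideanSpace ℝ (Fin 5)) :
    inner ℝ (sphereFeature x) t = √15 * (x 0 * x 1) * t 0 + √15 * (x 0 * x 2) * t 1
      + √15 * (x 1 * x 2) * t 2 + √15 / 2 * (x 0 ^ 2 - x 1 ^ 2) * t 3
      + √5 / 2 * (2 * x 2 ^ 2 - x 0 ^ 2 - x 1 ^ 2) * t 4 := by
  simp [sphereFeature, PiLp.inner_apply, Fin.sum_univ_five]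
  ring

lemma integral_inner_sphereFeature [IsProbabilityMeasure U]
    (hU : U {x : Fin 3 → ℝ | ∑ a, x a ^ 2 = 1}ᶜ = 0)
    (hrot : ∀ O : Matrix (Fin 3) (Fin 3) ℝ, O * Oᵀ = 1 → Measure.map (fun x ↦ O *ᵥ x) U = U)
    (t : EuclideanSpace ℝ (Fin 5)) : ∫ x, inner ℝ (sphereFeature x) t ∂U = 0 := by
  have hi {g : (Fin 3 → ℝ) → ℝ} (hg : Continuous g) := integrable_of_continuous_of_sphere hU hg
  have p1 : mixedMoment U ![0, 2, 0] = mixedMoment U ![2, 0, 0] := by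
    rw [← mixedMoment_comp_perm hrot _ (Equiv.swap 0 1)]; congr 1; ext i; fin_cases i <;> rfl
  have p2 : mixedMoment U ![0, 0, 2] = mixedMoment U ![2, 0, 0] := by
    rw [← mixedMoment_comp_perm hrot _ (Equiv.swap 0 2)]; congr 1; ext i; fin_cases i <;> rfl
  have h01 := mixedMoment_eq_zero hrot (e := ![1, 1, 0]) ⟨0, by decide⟩
  have h02 := mixedMoment_eq_zero hrot (e := ![1, 0, 1]) ⟨0, by decide⟩
  have h12 := mixedMoment_eq_zero hrot (e := ![0, 1, 1]) ⟨1, by decide⟩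
  have key : ∫ x, inner ℝ (sphereFeature x) t ∂U =
      √15 * t 0 * mixedMoment U ![1, 1, 0] + √15 * t 1 * mixedMoment U ![1, 0, 1]
      + √15 * t 2 * mixedMoment U ![0, 1, 1]
      + (√15 / 2 * t 3 - √5 / 2 * t 4) * mixedMoment U ![2, 0, 0]
      + (-√15 / 2 * t 3 - √5 / 2 * t 4) * mixedMoment U ![0, 2, 0]
      + √5 * t 4 * mixedMoment U ![0, 0, 2] := by
    simp only [mixedMoment]
    simp only [← integral_const_mul]
    simp only [cons_val, pow_zero, mul_one, one_mul]
    rw [← integral_add, ← integral_add, ← integral_add, ← integral_add, ← integral_add]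
    · congr 1; ext x; rw [inner_sphereFeature]; ring
    all_goals exact hi (by fun_prop)
  rw [key, h01, h02, h12, p1, p2]; ring

lemma integral_inner_sphereFeature_sq [IsProbabilityMeasure U]
    (hU : U {x : Fin 3 → ℝ | ∑ a, x a ^ 2 = 1}ᶜ = 0)
    (hrot : ∀ O : Matrix (Fin 3) (Fin 3) ℝ, O * Oᵀ = 1 → Measure.map (fun x ↦ O *ᵥ x) U = U)
    (t : EuclideanSpace ℝ (Fin 5)) :
    ∫ x, (inner ℝ (sphereFeature x) t) ^ 2 ∂U = ‖t‖ ^ 2 := by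
  have hi {g : (Fin 3 → ℝ) → ℝ} (hg : Continuous g) := integrable_of_continuous_of_sphere hU hg
  obtain ⟨v1, v2⟩ := mixedMoment_values hU hrot
  have p1 : mixedMoment U ![0, 4, 0] = 1 / 5 := by
    rw [← v1, ← mixedMoment_comp_perm hrot _ (Equiv.swap 0 1)]; congr 1; ext i; fin_cases i <;> rfl
  have p2 : mixedMoment U ![0, 0, 4] = 1 / 5 := by
    rw [← v1, ← mixedMoment_comp_perm hrot _ (Equiv.swap 0 2)]; congr 1; ext i; fin_cases i <;> rfl
  have p3 : mixedMoment U ![2, 0, 2] = 1 / 15 := by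
    rw [← v2, ← mixedMoment_comp_perm hrot _ (Equiv.swap 1 2)]; congr 1; ext i; fin_cases i <;> rfl
  have p4 : mixedMoment U ![0, 2, 2] = 1 / 15 := by
    rw [← v2, ← mixedMoment_comp_perm hrot _ (Equiv.swap 0 2)]; congr 1; ext i; fin_cases i <;> rfl
  have z {e : Fin 3 → ℕ} (he : ∃ a, Odd (e a)) : mixedMoment U e = 0 := mixedMoment_eq_zero hrot he
  set c := √15 / 2 * t 3 - √5 / 2 * t 4 with hc
  set d := -√15 / 2 * t 3 - √5 / 2 * t 4 with hd
  have key : ∫ x, (inner ℝ (sphereFeature x) t) ^ 2 ∂U =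
      c ^ 2 * mixedMoment U ![4, 0, 0] + d ^ 2 * mixedMoment U ![0, 4, 0]
      + (√5 * t 4) ^ 2 * mixedMoment U ![0, 0, 4]
      + ((√15 * t 0) ^ 2 + 2 * c * d) * mixedMoment U ![2, 2, 0]
      + ((√15 * t 1) ^ 2 + 2 * c * (√5 * t 4)) * mixedMoment U ![2, 0, 2]
      + ((√15 * t 2) ^ 2 + 2 * d * (√5 * t 4)) * mixedMoment U ![0, 2, 2]
      + 2 * c * (√15 * t 0) * mixedMoment U ![3, 1, 0]
      + 2 * c * (√15 * t 1) * mixedMoment U ![3, 0, 1]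
      + 2 * d * (√15 * t 0) * mixedMoment U ![1, 3, 0]
      + 2 * d * (√15 * t 2) * mixedMoment U ![0, 3, 1]
      + 2 * (√5 * t 4) * (√15 * t 1) * mixedMoment U ![1, 0, 3]
      + 2 * (√5 * t 4) * (√15 * t 2) * mixedMoment U ![0, 1, 3]
      + (2 * c * (√15 * t 2) + 2 * (√15 * t 0) * (√15 * t 1)) * mixedMoment U ![2, 1, 1]
      + (2 * d * (√15 * t 1) + 2 * (√15 * t 0) * (√15 * t 2)) * mixedMoment U ![1, 2, 1]
      + (2 * (√5 * t 4) * (√15 * t 0) + 2 * (√15 * t 1) * (√15 * t 2))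
        * mixedMoment U ![1, 1, 2] := by
    simp only [mixedMoment]
    simp only [← integral_const_mul]
    simp only [cons_val, pow_zero, mul_one, one_mul]
    rw [← integral_add, ← integral_add, ← integral_add, ← integral_add, ← integral_add,
      ← integral_add, ← integral_add, ← integral_add, ← integral_add, ← integral_add,
      ← integral_add, ← integral_add, ← integral_add, ← integral_add]
    · congr 1; ext x; rw [inner_sphereFeature]; ring
    all_goals exact hi (by fun_prop)
  rw [key, v1, v2, p1, p2, p3, p4, z (e := ![3, 1, 0]) ⟨0, by decide⟩,
    z (e := ![3, 0, 1]) ⟨0, by decide⟩, z (e := ![1, 3, 0]) ⟨0, by decide⟩,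
    z (e := ![0, 3, 1]) ⟨1, by decide⟩, z (e := ![1, 0, 3]) ⟨0, by decide⟩,
    z (e := ![0, 1, 3]) ⟨1, by decide⟩, z (e := ![2, 1, 1]) ⟨1, by decide⟩,
    z (e := ![1, 2, 1]) ⟨0, by decide⟩, z (e := ![1, 1, 2]) ⟨0, by decide⟩,
    norm_sq_eq_fin_five, hc, hd]
  have h15 : √15 ^ 2 = 15 := Real.sq_sqrt (by norm_num)
  have h5 : √5 ^ 2 = 5 := Real.sq_sqrt (by norm_num)
  ring_nf
  simp only [h15, h5]
  ring

end Moments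

lemma maxEig_le_iff (A : Matrix (Fin 3) (Fin 3) ℝ) (c : ℝ) :
    maxEig A ≤ c ↔ ∀ v : Fin 3 → ℝ, ∑ i, v i ^ 2 = 1 → v ⬝ᵥ A *ᵥ v ≤ c := by
  have hset : {r | ∃ v : Fin 3 → ℝ, (∑ i, v i ^ 2) = 1 ∧ r = v ⬝ᵥ A *ᵥ v} =
      (fun v ↦ v ⬝ᵥ A *ᵥ v) '' {v : Fin 3 → ℝ | ∑ a, v a ^ 2 = 1} := by
    ext r; simp [eq_comm]
  have hcont : Continuous fun v : Fin 3 → ℝ ↦ v ⬝ᵥ A *ᵥ v :=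
    continuous_id.dotProduct (continuous_const.matrix_mulVec continuous_id)
  rw [maxEig, hset, csSup_le_iff (isCompact_sum_sq_eq_one.image hcont).bddAbove
    ((Set.nonempty_of_mem (x := ![1, 0, 0]) (by simp [Fin.sum_univ_three])).image _)]
  simp

lemma le_minEig_iff (A : Matrix (Fin 3) (Fin 3) ℝ) (c : ℝ) :
    c ≤ minEig A ↔ ∀ v : Fin 3 → ℝ, ∑ i, v i ^ 2 = 1 → c ≤ v ⬝ᵥ A *ᵥ v := by
  have hset : {r | ∃ v : Fin 3 → ℝ, (∑ i, v i ^ 2) = 1 ∧ r = v ⬝ᵥ A *ᵥ v} =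
      (fun v ↦ v ⬝ᵥ A *ᵥ v) '' {v : Fin 3 → ℝ | ∑ a, v a ^ 2 = 1} := by
    ext r; simp [eq_comm]
  have hcont : Continuous fun v : Fin 3 → ℝ ↦ v ⬝ᵥ A *ᵥ v :=
    continuous_id.dotProduct (continuous_const.matrix_mulVec continuous_id)
  rw [minEig, hset, le_csInf_iff (isCompact_sum_sq_eq_one.image hcont).bddBelow
    ((Set.nonempty_of_mem (x := ![1, 0, 0]) (by simp [Fin.sum_univ_three])).image _)]
  simp

lemma dotProduct_cartanMatrix_mulVec (y : EuclideanSpace ℝ (Fin 5)) (v : Fin 3 → ℝ) :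
    v ⬝ᵥ cartanMatrix y *ᵥ v = 2 / √5 * inner ℝ (sphereFeature v) y := by
  have h5 : √5 * √5 = 5 := Real.mul_self_sqrt (by norm_num)
  have h15 : √15 = √5 * √3 := by rw [← Real.sqrt_mul (by norm_num)]; norm_num
  rw [inner_sphereFeature, h15]
  simp [cartanMatrix, mulVec, dotProduct, Fin.sum_univ_three]
  field_simp
  ring

lemma inner_sphereFeature_sphereFeature {x v : Fin 3 → ℝ} (hx : ∑ a, x a ^ 2 = 1)
    (hv : ∑ a, v a ^ 2 = 1) :
    inner ℝ (sphereFeature v) (sphereFeature x) = 5 / 2 * (3 * (x ⬝ᵥ v) ^ 2 - 1) := by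
  have h5 : √5 * √5 = 5 := Real.mul_self_sqrt (by norm_num)
  have h15 : √15 * √15 = 15 := Real.mul_self_sqrt (by norm_num)
  have h1 : (1 : ℝ) = (∑ a, x a ^ 2) * ∑ a, v a ^ 2 := by rw [hx, hv, one_mul]
  rw [h1, inner_sphereFeature]
  simp [sphereFeature, dotProduct, Fin.sum_univ_three]
  ring_nf
  simp only [Real.sq_sqrt (show (0 : ℝ) ≤ 15 by norm_num),
    Real.sq_sqrt (show (0 : ℝ) ≤ 5 by norm_num)]
  ring

/-- The vectors `y` such that all eigenvalues of `cartanMatrix y` are at most `a`. -/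
def cartanSublevel (a : ℝ) : Set (EuclideanSpace ℝ (Fin 5)) :=
  {y | ∀ v : Fin 3 → ℝ, ∑ i, v i ^ 2 = 1 → v ⬝ᵥ cartanMatrix y *ᵥ v ≤ a}

lemma cartanSublevel_eq_biInter (a : ℝ) : cartanSublevel a =
    ⋂ v ∈ {v : Fin 3 → ℝ | ∑ i, v i ^ 2 = 1}, {y | inner ℝ ((2 / √5) • sphereFeature v) y ≤ a} := by
  ext y
  simp [cartanSublevel, dotProduct_cartanMatrix_mulVec, real_inner_smul_left]

lemma convex_cartanSublevel (a : ℝ) : Convex ℝ (cartanSublevel a) := by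
  rw [cartanSublevel_eq_biInter]
  exact convex_iInter₂ fun v _ ↦ convex_halfSpace_le (innerₛₗ ℝ _).isLinear a

lemma isClosed_cartanSublevel (a : ℝ) : IsClosed (cartanSublevel a) := by
  rw [cartanSublevel_eq_biInter]
  exact isClosed_biInter fun v _ ↦ isClosed_le (by fun_prop) continuous_const

/-- The normalized sum of the features of a sample. -/
def featureSum (n : ℕ) (x : Fin n → (Fin 3 → ℝ)) : EuclideanSpace ℝ (Fin 5) :=
  (√n)⁻¹ • ∑ i, sphereFeature (x i)

lemma continuous_featureSum (n : ℕ) : Continuous (featureSum n) := by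
  have (i : Fin n) : Continuous fun x : Fin n → (Fin 3 → ℝ) ↦ sphereFeature (x i) :=
    continuous_sphereFeature.comp (continuous_apply i)
  unfold featureSum
  fun_prop

lemma sqrt_mul_rayleigh {n : ℕ} (hn : n ≠ 0) {x : Fin n → (Fin 3 → ℝ)}
    (hx : ∀ i, ∑ a, x i a ^ 2 = 1) {v : Fin 3 → ℝ} (hv : ∑ a, v a ^ 2 = 1) :
    √5 * (√n * (3 * (v ⬝ᵥ Sn 3 n x *ᵥ v) - 1)) = v ⬝ᵥ cartanMatrix (featureSum n x) *ᵥ v := by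
  have hn' : (0 : ℝ) < n := by positivity
  have hS : v ⬝ᵥ Sn 3 n x *ᵥ v = (n : ℝ)⁻¹ * ∑ i, (x i ⬝ᵥ v) ^ 2 := by
    simp only [Sn, mulVec, dotProduct, Fin.sum_univ_three, Matrix.of_apply, one_div]
    simp only [Finset.mul_sum, Finset.sum_mul, ← Finset.sum_add_distrib]
    refine Finset.sum_congr rfl fun i _ ↦ ?_
    ring
  have hsum : ∑ i : Fin n, inner ℝ (sphereFeature v) (sphereFeature (x i)) =
      5 / 2 * (3 * ∑ i, (x i ⬝ᵥ v) ^ 2 - n) := by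
    rw [Finset.sum_congr rfl fun i _ ↦ inner_sphereFeature_sphereFeature (hx i) hv,
      ← Finset.mul_sum, Finset.sum_sub_distrib, ← Finset.mul_sum]
    simp
  rw [dotProduct_cartanMatrix_mulVec, featureSum, inner_smul_right, inner_sum, hsum, hS]
  have h5 : √5 * √5 = 5 := Real.mul_self_sqrt (by norm_num)
  have hnn : √(n : ℝ) * √n = n := Real.mul_self_sqrt hn'.le
  have hs5 : √5 ≠ 0 := by positivity
  have hsn : √(n : ℝ) ≠ 0 := by positivity
  generalize ∑ i, (x i ⬝ᵥ v) ^ 2 = S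
  generalize √(n : ℝ) = r at hsn hnn ⊢
  rw [← hnn]
  field_simp
  linear_combination (3 * S - r ^ 2) * h5

lemma sqrt_mul_maxEig_le_iff {n : ℕ} (hn : n ≠ 0) {x : Fin n → (Fin 3 → ℝ)}
    (hx : ∀ i, ∑ a, x i a ^ 2 = 1) (l : ℝ) :
    √n * (3 * maxEig (Sn 3 n x) - 1) ≤ l ↔ featureSum n x ∈ cartanSublevel (√5 * l) := by
  have hn' : (0 : ℝ) < √n := Real.sqrt_pos.2 (by positivity)
  have h5 : (0 : ℝ) < √5 := by positivity
  have e (r : ℝ) : √n * (3 * r - 1) ≤ l ↔ r ≤ (l / √n + 1) / 3 := by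
    rw [mul_comm, ← le_div_iff₀ hn', le_div_iff₀ (show (0 : ℝ) < 3 by norm_num)]
    constructor <;> intro h <;> linarith
  rw [e, maxEig_le_iff]
  refine forall₂_congr fun v hv ↦ ?_
  rw [← e, ← sqrt_mul_rayleigh hn hx hv, mul_le_mul_iff_right₀ h5]

lemma neg_sqrt_mul_minEig_le_iff {n : ℕ} (hn : n ≠ 0) {x : Fin n → (Fin 3 → ℝ)}
    (hx : ∀ i, ∑ a, x i a ^ 2 = 1) (l : ℝ) :
    -(√n * (3 * minEig (Sn 3 n x) - 1)) ≤ l ↔ featureSum n x ∈ -cartanSublevel (√5 * l) := by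
  have hn' : (0 : ℝ) < √n := Real.sqrt_pos.2 (by positivity)
  have h5 : (0 : ℝ) < √5 := by positivity
  have e (r : ℝ) : -(√n * (3 * r - 1)) ≤ l ↔ (-l / √n + 1) / 3 ≤ r := by
    rw [neg_le, mul_comm, ← div_le_iff₀ hn', div_le_iff₀ (show (0 : ℝ) < 3 by norm_num)]
    constructor <;> intro h <;> linarith
  rw [e, le_minEig_iff]
  refine forall₂_congr fun v hv ↦ ?_
  rw [← e, ← mul_le_mul_iff_right₀ h5, mul_neg, sqrt_mul_rayleigh hn hx hv,
    dotProduct_cartanMatrix_mulVec, dotProduct_cartanMatrix_mulVec, inner_neg_right, mul_neg]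

section CentralLimit

variable {U : Measure (Fin 3 → ℝ)} [IsProbabilityMeasure U]

lemma charFun_map_featureSum (n : ℕ) {t : EuclideanSpace ℝ (Fin 5)} (ht : t ≠ 0) :
    charFun ((Measure.pi fun _ : Fin n ↦ U).map (featureSum n)) t =
      charFun (U.map fun x ↦ inner ℝ (sphereFeature x) t / ‖t‖) ((√n)⁻¹ * ‖t‖) ^ n := by
  have hc : Continuous fun x ↦ inner ℝ (sphereFeature x) t / ‖t‖ :=
    (continuous_sphereFeature.inner continuous_const).div_const _
  rw [charFun_apply, integral_map (continuous_featureSum n).aemeasurable (by fun_prop),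
    charFun_apply_real, integral_map hc.aemeasurable (by fun_prop)]
  have := integral_fintype_prod_eq_pow (ι := Fin n) (μ := U)
    (fun x ↦ Complex.exp (((√n)⁻¹ * ‖t‖ : ℝ) * (inner ℝ (sphereFeature x) t / ‖t‖ : ℝ) * Complex.I))
  rw [Fintype.card_fin] at this
  rw [← this]
  congr 1
  ext x
  rw [← Complex.exp_sum, featureSum, real_inner_smul_left, sum_inner]
  congr 1
  push_cast
  rw [Finset.mul_sum, Finset.sum_mul]
  refine Finset.sum_congr rfl fun i _ ↦ ?_
  have : (‖t‖ : ℂ) ≠ 0 := by simpa using ht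
  field_simp

lemma tendsto_measure_featureSum
    (hU : U {x : Fin 3 → ℝ | ∑ a, x a ^ 2 = 1}ᶜ = 0)
    (hrot : ∀ O : Matrix (Fin 3) (Fin 3) ℝ, O * Oᵀ = 1 → Measure.map (fun x ↦ O *ᵥ x) U = U)
    {C : Set (EuclideanSpace ℝ (Fin 5))} (hC : MeasurableSet C)
    (hfr : stdGaussian (EuclideanSpace ℝ (Fin 5)) (frontier C) = 0) :
    Tendsto (fun n ↦ ((Measure.pi fun _ : Fin n ↦ U) (featureSum n ⁻¹' C)).toReal) atTop
      (𝓝 (stdGaussian (EuclideanSpace ℝ (Fin 5)) C).toReal) := by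
  have hm (n : ℕ) : AEMeasurable (featureSum n) (Measure.pi fun _ : Fin n ↦ U) :=
    (continuous_featureSum n).aemeasurable
  let P (n : ℕ) : ProbabilityMeasure (EuclideanSpace ℝ (Fin 5)) :=
    ⟨(Measure.pi fun _ : Fin n ↦ U).map (featureSum n), Measure.isProbabilityMeasure_map (hm n)⟩
  let G : ProbabilityMeasure (EuclideanSpace ℝ (Fin 5)) :=
    ⟨stdGaussian (EuclideanSpace ℝ (Fin 5)), inferInstance⟩
  have hPG : Tendsto P atTop (𝓝 G) := by
    refine ProbabilityMeasure.tendsto_of_tendsto_charFun fun t ↦ ?_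
    rcases eq_or_ne t 0 with rfl | ht
    · simp
    have ht' : ‖t‖ ≠ 0 := by simpa using ht
    have hc : Continuous fun x ↦ inner ℝ (sphereFeature x) t / ‖t‖ :=
      (continuous_sphereFeature.inner continuous_const).div_const _
    have := tendsto_charFun_inv_sqrt_mul_pow (P := U) hc.aemeasurable
      (by rw [integral_div, integral_inner_sphereFeature hU hrot, zero_div])
      (by simp only [Pi.pow_apply, div_pow]
          rw [integral_div, integral_inner_sphereFeature_sq hU hrot]
          field_simp) ‖t‖
    simp only [← charFun_map_featureSum _ ht] at this
    simpa [P, G, charFun_stdGaussian] using this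
  have := ProbabilityMeasure.tendsto_measure_of_null_frontier_of_tendsto' hPG (E := C) hfr
  have h2 := (ENNReal.tendsto_toReal (measure_ne_top _ C)).comp this
  refine h2.congr fun n ↦ ?_
  simp only [Function.comp, P, ProbabilityMeasure.coe_mk]
  rw [Measure.map_apply_of_aemeasurable (hm n) hC]

end CentralLimit

section PolarCoordinates

open Metric Module

variable {E : Type*} [NormedAddCommGroup E] [NormedSpace ℝ E]

lemma homogeneous_smul_mul_gaussian {g : E → ℝ} {k : ℕ}
    (hg : ∀ r : ℝ, ∀ y, g (r • y) = r ^ k * g y) (p : sphere (0 : E) 1 × Set.Ioi (0 : ℝ)) :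
    g (p.2.1 • p.1.1) * exp (-‖p.2.1 • p.1.1‖ ^ 2 / 2) =
      g p.1.1 * (p.2.1 ^ k * exp (-p.2.1 ^ 2 / 2)) := by
  rw [hg, norm_smul, norm_eq_of_mem_sphere, mul_one, norm_eq_abs, sq_abs]
  ring

variable [FiniteDimensional ℝ E] [MeasurableSpace E] [BorelSpace E] [Nontrivial E] (μ : Measure E) [μ.IsAddHaarMeasure]

lemma integral_eq_integral_toSphere_prod (F : E → ℝ) :
    ∫ y, F y ∂μ =
      ∫ p, F (p.2.1 • p.1.1) ∂(μ.toSphere.prod (.volumeIoiPow (finrank ℝ E - 1))) := by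
  rw [← μ.measurePreserving_homeomorphUnitSphereProd.integral_comp
    (Homeomorph.measurableEmbedding _)]
  conv_lhs => rw [← MeasureTheory.restrict_compl_singleton (μ := μ) (0 : E),
    ← integral_subtype_comap (measurableSet_singleton _).compl]
  refine integral_congr_ae (.of_forall fun x ↦ ?_)
  simp only [← homeomorphUnitSphereProd_symm_apply_coe, Homeomorph.symm_apply_apply]

lemma integrable_iff_integrable_toSphere_prod (F : E → ℝ) :
    Integrable F μ ↔ Integrable (fun p ↦ F (p.2.1 • p.1.1))
      (μ.toSphere.prod (.volumeIoiPow (finrank ℝ E - 1))) := by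
  rw [← μ.measurePreserving_homeomorphUnitSphereProd.integrable_comp_emb
    (Homeomorph.measurableEmbedding _)]
  conv_lhs => rw [← MeasureTheory.restrict_compl_singleton (μ := μ) (0 : E), ← IntegrableOn,
    integrableOn_iff_comap_subtypeVal (measurableSet_singleton _).compl]
  refine integrable_congr (.of_forall fun x ↦ ?_)
  simp only [Function.comp_def, ← homeomorphUnitSphereProd_symm_apply_coe,
    Homeomorph.symm_apply_apply]

lemma integral_volumeIoiPow (n : ℕ) (h : ℝ → ℝ) :
    ∫ r, h r ∂(Measure.volumeIoiPow n) = ∫ r in Set.Ioi 0, r ^ n * h r := by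
  simp only [Measure.volumeIoiPow, ENNReal.ofReal]
  rw [integral_withDensity_eq_integral_smul,
    integral_subtype_comap measurableSet_Ioi fun a ↦ Real.toNNReal (a ^ n) • h a,
    setIntegral_congr_fun measurableSet_Ioi fun x hx ↦ ?_]
  · rw [NNReal.smul_def, Real.coe_toNNReal _ (pow_nonneg hx.out.le _), smul_eq_mul]
  · exact (measurable_subtype_coe.pow_const _).real_toNNReal

lemma integrable_volumeIoiPow_iff (n : ℕ) (h : ℝ → ℝ) :
    Integrable (fun r : Set.Ioi (0 : ℝ) ↦ h r) (Measure.volumeIoiPow n) ↔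
      IntegrableOn (fun r ↦ r ^ n * h r) (Set.Ioi 0) := by
  simp only [Measure.volumeIoiPow, ENNReal.ofReal]
  rw [integrable_withDensity_iff_integrable_smul,
    integrableOn_iff_comap_subtypeVal measurableSet_Ioi]
  · refine integrable_congr (.of_forall fun x ↦ ?_)
    simp [NNReal.smul_def, Real.coe_toNNReal _ (pow_nonneg x.2.out.le _)]
  · exact (measurable_subtype_coe.pow_const _).real_toNNReal

/-- The absolute moments of the half-line Gaussian weight. -/
def gaussianRadialMoment (k : ℕ) : ℝ := ∫ r in Set.Ioi (0 : ℝ), r ^ k * exp (-r ^ 2 / 2)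

lemma integrableOn_pow_mul_exp_neg_sq_div_two (k : ℕ) :
    IntegrableOn (fun r : ℝ ↦ r ^ k * exp (-r ^ 2 / 2)) (Set.Ioi 0) := by
  have h := integrableOn_rpow_mul_exp_neg_mul_sq (b := 1 / 2) (by norm_num) (s := k)
    (by have := k.cast_nonneg (α := ℝ); linarith)
  refine h.congr_fun (fun r _ ↦ ?_) measurableSet_Ioi
  simp only [rpow_natCast]
  ring_nf

lemma gaussianRadialMoment_eq (k : ℕ) : gaussianRadialMoment k =
    (1 / 2 : ℝ) ^ (-((k : ℝ) + 1) / 2) * (1 / 2) * Gamma (((k : ℝ) + 1) / 2) := by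
  have hk := k.cast_nonneg (α := ℝ)
  rw [← integral_rpow_mul_exp_neg_mul_rpow (p := 2) (q := k) (b := 1 / 2) (by norm_num)
    (by linarith) (by norm_num), gaussianRadialMoment]
  refine setIntegral_congr_fun measurableSet_Ioi fun r _ ↦ ?_
  simp only [rpow_natCast, rpow_two]
  ring_nf

lemma gaussianRadialMoment_pos (k : ℕ) : 0 < gaussianRadialMoment k := by
  rw [gaussianRadialMoment_eq]
  have : 0 < Gamma (((k : ℝ) + 1) / 2) := Gamma_pos_of_pos (by positivity)
  positivity

lemma gaussianRadialMoment_add_two (k : ℕ) :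
    gaussianRadialMoment (k + 2) = (k + 1) * gaussianRadialMoment k := by
  rw [gaussianRadialMoment_eq, gaussianRadialMoment_eq]
  have h1 : (((k + 2 : ℕ) : ℝ) + 1) / 2 = ((k : ℝ) + 1) / 2 + 1 := by push_cast; ring
  have h2 : -(((k + 2 : ℕ) : ℝ) + 1) / 2 = -((k : ℝ) + 1) / 2 + (-1 : ℝ) := by push_cast; ring
  rw [h1, h2, Gamma_add_one (by positivity), rpow_add (by norm_num), rpow_neg_one]
  ring

variable {μ}

lemma integrable_homogeneous_mul_gaussian {g : E → ℝ} {k : ℕ} (hc : Continuous g)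
    (hg : ∀ r : ℝ, ∀ y, g (r • y) = r ^ k * g y) :
    Integrable (fun y ↦ g y * exp (-‖y‖ ^ 2 / 2)) μ := by
  rw [integrable_iff_integrable_toSphere_prod]
  simp only [homogeneous_smul_mul_gaussian hg]
  refine Integrable.mul_prod (f := fun x : sphere (0 : E) 1 ↦ g x)
    (g := fun r : Set.Ioi (0 : ℝ) ↦ r.1 ^ k * exp (-r.1 ^ 2 / 2)) ?_ ?_
  · exact (hc.comp continuous_subtype_val).integrable_of_hasCompactSupport
      (HasCompactSupport.of_compactSpace _)
  · rw [integrable_volumeIoiPow_iff _ fun r ↦ r ^ k * exp (-r ^ 2 / 2)]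
    refine (integrableOn_pow_mul_exp_neg_sq_div_two (finrank ℝ E - 1 + k)).congr_fun
      (fun r _ ↦ ?_) measurableSet_Ioi
    simp only [pow_add, mul_assoc]

lemma integral_homogeneous_mul_gaussian {g : E → ℝ} {k : ℕ}
    (hg : ∀ r : ℝ, ∀ y, g (r • y) = r ^ k * g y) :
    ∫ y, g y * exp (-‖y‖ ^ 2 / 2) ∂μ =
      (∫ x, g x.1 ∂μ.toSphere) * gaussianRadialMoment (finrank ℝ E - 1 + k) := by
  rw [integral_eq_integral_toSphere_prod]
  simp only [homogeneous_smul_mul_gaussian hg]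
  rw [integral_prod_mul (fun x : sphere (0 : E) 1 ↦ g x)
    (fun r : Set.Ioi (0 : ℝ) ↦ r.1 ^ k * exp (-r.1 ^ 2 / 2)),
    integral_volumeIoiPow _ fun r ↦ r ^ k * exp (-r ^ 2 / 2), gaussianRadialMoment]
  simp only [pow_add, mul_assoc]

end PolarCoordinates

section CartanMoments

open Metric Module

lemma continuous_cartanCubic : Continuous cartanCubic := by
  unfold cartanCubic
  fun_prop

lemma cartanCubic_smul (r : ℝ) (y : EuclideanSpace ℝ (Fin 5)) :
    cartanCubic (r • y) = r ^ 3 * cartanCubic y := by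
  simp only [cartanCubic, PiLp.smul_apply, smul_eq_mul]
  ring

/-- The gradient of `cartanCubic`. -/
def cartanGrad (y : EuclideanSpace ℝ (Fin 5)) : Fin 5 → ℝ :=
  ![-6 * y 4 * y 0 + 3 * √3 * y 1 * y 2,
    3 * y 4 * y 1 + 3 * √3 * y 3 * y 1 + 3 * √3 * y 0 * y 2,
    3 * y 4 * y 2 - 3 * √3 * y 3 * y 2 + 3 * √3 * y 0 * y 1,
    -6 * y 4 * y 3 + 3 * √3 / 2 * (y 1 ^ 2 - y 2 ^ 2),
    3 * y 4 ^ 2 - 3 * y 3 ^ 2 - 3 * y 0 ^ 2 + 3 / 2 * (y 1 ^ 2 + y 2 ^ 2)]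

/-- The diagonal second derivatives of `cartanCubic`. -/
def cartanHessDiag (y : EuclideanSpace ℝ (Fin 5)) : Fin 5 → ℝ :=
  ![-6 * y 4, 3 * y 4 + 3 * √3 * y 3, 3 * y 4 - 3 * √3 * y 3, -6 * y 4, 6 * y 4]

lemma continuous_cartanGrad (i : Fin 5) : Continuous fun y ↦ cartanGrad y i := by
  fin_cases i <;> simp [cartanGrad] <;> fun_prop

lemma continuous_cartanHessDiag (i : Fin 5) : Continuous fun y ↦ cartanHessDiag y i := by
  fin_cases i <;> simp [cartanHessDiag] <;> fun_prop

lemma cartanGrad_smul (r : ℝ) (y : EuclideanSpace ℝ (Fin 5)) (i : Fin 5) :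
    cartanGrad (r • y) i = r ^ 2 * cartanGrad y i := by
  fin_cases i <;> simp [cartanGrad] <;> ring

lemma cartanHessDiag_smul (r : ℝ) (y : EuclideanSpace ℝ (Fin 5)) (i : Fin 5) :
    cartanHessDiag (r • y) i = r * cartanHessDiag y i := by
  fin_cases i <;> simp [cartanHessDiag] <;> ring

/-- `cartanCubic` is harmonic. -/
lemma sum_cartanHessDiag (y : EuclideanSpace ℝ (Fin 5)) : ∑ i, cartanHessDiag y i = 0 := by
  simp [cartanHessDiag, Fin.sum_univ_five]
  ring

/-- The Cartan–Münzner equation. -/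
lemma sum_cartanGrad_sq (y : EuclideanSpace ℝ (Fin 5)) :
    ∑ i, cartanGrad y i ^ 2 = 9 * ‖y‖ ^ 4 := by
  have h3 : √3 ^ 2 = 3 := Real.sq_sqrt (by norm_num)
  rw [show ‖y‖ ^ 4 = (‖y‖ ^ 2) ^ 2 by ring, norm_sq_eq_fin_five]
  simp only [cartanGrad, Fin.sum_univ_five, Matrix.cons_val]
  ring_nf
  rw [h3]
  ring

lemma sum_mul_cartanGrad (y : EuclideanSpace ℝ (Fin 5)) :
    ∑ i, y i * cartanGrad y i = 3 * cartanCubic y := by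
  simp only [cartanGrad, cartanCubic, Fin.sum_univ_five, Matrix.cons_val]
  ring

lemma hasDerivAt_zero_of_eq_cubic {f : ℝ → ℝ} {a b c d : ℝ}
    (h : ∀ t, f t = a + t * b + t ^ 2 * c + t ^ 3 * d) : HasDerivAt f b 0 := by
  have : HasDerivAt (fun t : ℝ ↦ a + t * b + t ^ 2 * c + t ^ 3 * d) b 0 := by
    refine (((((hasDerivAt_id (0 : ℝ)).mul_const b).const_add a).add
      ((hasDerivAt_pow 2 (0 : ℝ)).mul_const c)).add
        ((hasDerivAt_pow 3 (0 : ℝ)).mul_const d)).congr_deriv ?_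
    simp
  exact (funext h : f = _) ▸ this

lemma hasLineDerivAt_cartanCubic (y : EuclideanSpace ℝ (Fin 5)) (i : Fin 5) :
    HasLineDerivAt ℝ cartanCubic (cartanGrad y i) y (EuclideanSpace.single i 1) := by
  refine hasDerivAt_zero_of_eq_cubic (a := cartanCubic y) (c := cartanHessDiag y i / 2)
    (d := if i = 4 then 1 else 0) fun t ↦ ?_
  fin_cases i <;> simp [cartanGrad, cartanHessDiag, cartanCubic] <;> ring

lemma hasLineDerivAt_cartanGrad (y : EuclideanSpace ℝ (Fin 5)) (i : Fin 5) :
    HasLineDerivAt ℝ (fun y ↦ cartanGrad y i) (cartanHessDiag y i) y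
      (EuclideanSpace.single i 1) := by
  refine hasDerivAt_zero_of_eq_cubic (a := cartanGrad y i) (c := if i = 4 then 3 else 0)
    (d := 0) fun t ↦ ?_
  fin_cases i <;> simp [cartanGrad, cartanHessDiag] <;> ring

lemma hasLineDerivAt_gaussian (y : EuclideanSpace ℝ (Fin 5)) (i : Fin 5) :
    HasLineDerivAt ℝ (fun y ↦ exp (-‖y‖ ^ 2 / 2)) (-(y i * exp (-‖y‖ ^ 2 / 2))) y
      (EuclideanSpace.single i 1) := by
  have h : HasDerivAt (fun t : ℝ ↦ -‖y + t • EuclideanSpace.single i (1 : ℝ)‖ ^ 2 / 2)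
      (-y i) 0 := by
    refine hasDerivAt_zero_of_eq_cubic (a := -‖y‖ ^ 2 / 2) (c := -1 / 2) (d := 0) fun t ↦ ?_
    rw [norm_add_sq_real, norm_smul, inner_smul_right,
      EuclideanSpace.inner_single_right]
    simp
    ring
  unfold HasLineDerivAt
  refine h.exp.congr_deriv ?_
  simp
  ring

lemma hasLineDerivAt_cartanCubic_pow_mul_cartanGrad (j : ℕ) (y : EuclideanSpace ℝ (Fin 5))
    (i : Fin 5) :
    HasLineDerivAt ℝ (fun y ↦ cartanCubic y ^ j * cartanGrad y i)
      (j * (cartanCubic y ^ (j - 1) * cartanGrad y i ^ 2) +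
        cartanCubic y ^ j * cartanHessDiag y i) y (EuclideanSpace.single i 1) := by
  have h1 := hasLineDerivAt_cartanCubic y i
  have h2 := hasLineDerivAt_cartanGrad y i
  unfold HasLineDerivAt at *
  refine ((h1.fun_pow j).mul h2).congr_deriv ?_
  simp
  ring

lemma integrable_cartanCubic_pow_mul_cartanGrad_deriv (j : ℕ) (i : Fin 5) :
    Integrable (fun y : EuclideanSpace ℝ (Fin 5) ↦
      (j * (cartanCubic y ^ (j - 1) * cartanGrad y i ^ 2) +
        cartanCubic y ^ j * cartanHessDiag y i) * exp (-‖y‖ ^ 2 / 2)) := by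
  have hP := continuous_cartanCubic
  have hG := continuous_cartanGrad i
  have hH := continuous_cartanHessDiag i
  have I1 : Integrable (fun y : EuclideanSpace ℝ (Fin 5) ↦
      (j * (cartanCubic y ^ (j - 1) * cartanGrad y i ^ 2)) * exp (-‖y‖ ^ 2 / 2)) := by
    refine integrable_homogeneous_mul_gaussian (k := 3 * (j - 1) + 4) (by fun_prop)
      fun r y ↦ ?_
    rw [cartanCubic_smul, cartanGrad_smul]
    ring
  have I2 : Integrable (fun y : EuclideanSpace ℝ (Fin 5) ↦
      (cartanCubic y ^ j * cartanHessDiag y i) * exp (-‖y‖ ^ 2 / 2)) := by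
    refine integrable_homogeneous_mul_gaussian (k := 3 * j + 1) (by fun_prop) fun r y ↦ ?_
    rw [cartanCubic_smul, cartanHessDiag_smul]
    ring
  simp only [add_mul]
  exact I1.add I2

lemma integrable_cartanCubic_pow_mul_coord_mul_cartanGrad (j : ℕ) (i : Fin 5) :
    Integrable (fun y : EuclideanSpace ℝ (Fin 5) ↦
      (cartanCubic y ^ j * (y i * cartanGrad y i)) * exp (-‖y‖ ^ 2 / 2)) := by
  have hP := continuous_cartanCubic
  have hG := continuous_cartanGrad i
  refine integrable_homogeneous_mul_gaussian (k := 3 * j + 3) (by fun_prop) fun r y ↦ ?_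
  rw [cartanCubic_smul, cartanGrad_smul, PiLp.smul_apply, smul_eq_mul]
  ring

lemma integral_cartanCubic_pow_mul_cartanGrad_mul_coord (j : ℕ) (i : Fin 5) :
    ∫ y, cartanCubic y ^ j * (y i * cartanGrad y i) * exp (-‖y‖ ^ 2 / 2) =
      ∫ y, (j * (cartanCubic y ^ (j - 1) * cartanGrad y i ^ 2) +
        cartanCubic y ^ j * cartanHessDiag y i) * exp (-‖y‖ ^ 2 / 2) := by
  have hP := continuous_cartanCubic
  have hG := continuous_cartanGrad i
  have I4 : Integrable (fun y : EuclideanSpace ℝ (Fin 5) ↦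
      (cartanCubic y ^ j * cartanGrad y i) * exp (-‖y‖ ^ 2 / 2)) := by
    refine integrable_homogeneous_mul_gaussian (k := 3 * j + 2) (by fun_prop) fun r y ↦ ?_
    rw [cartanCubic_smul, cartanGrad_smul]
    ring
  have key := integral_bilinear_hasLineDerivAt_right_eq_neg_left_of_integrable
    (μ := (volume : Measure (EuclideanSpace ℝ (Fin 5))))
    (f := fun y ↦ cartanCubic y ^ j * cartanGrad y i)
    (f' := fun y ↦ j * (cartanCubic y ^ (j - 1) * cartanGrad y i ^ 2) +
        cartanCubic y ^ j * cartanHessDiag y i)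
    (g := fun y ↦ exp (-‖y‖ ^ 2 / 2)) (g' := fun y ↦ -(y i * exp (-‖y‖ ^ 2 / 2)))
    (v := EuclideanSpace.single i 1) (B := ContinuousLinearMap.mul ℝ ℝ)
    (integrable_cartanCubic_pow_mul_cartanGrad_deriv j i)
    (by
      refine (integrable_cartanCubic_pow_mul_coord_mul_cartanGrad j i).neg.congr (.of_forall fun y ↦ ?_)
      simp only [Pi.neg_apply, ContinuousLinearMap.mul_apply']
      ring)
    (by simpa using I4)
    (fun y _ ↦ hasLineDerivAt_cartanCubic_pow_mul_cartanGrad j y i)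
    (fun y _ ↦ hasLineDerivAt_gaussian y i)
  simp only [ContinuousLinearMap.mul_apply'] at key
  rw [← neg_eq_iff_eq_neg, ← integral_neg] at key
  rw [← key]
  congr with y
  ring

lemma integral_cartanCubic_pow_succ_mul_gaussian (j : ℕ) :
    ∫ y, 3 * cartanCubic y ^ (j + 1) * exp (-‖y‖ ^ 2 / 2) =
      ∫ y, j * (cartanCubic y ^ (j - 1) * (9 * ‖y‖ ^ 4)) * exp (-‖y‖ ^ 2 / 2) := by
  calc ∫ y, 3 * cartanCubic y ^ (j + 1) * exp (-‖y‖ ^ 2 / 2)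
    _ = ∫ y, ∑ i, cartanCubic y ^ j * (y i * cartanGrad y i) * exp (-‖y‖ ^ 2 / 2) := by
      congr with y
      rw [← Finset.sum_mul, ← Finset.mul_sum, sum_mul_cartanGrad]
      ring
    _ = ∑ i, ∫ y, (j * (cartanCubic y ^ (j - 1) * cartanGrad y i ^ 2) +
        cartanCubic y ^ j * cartanHessDiag y i) * exp (-‖y‖ ^ 2 / 2) := by
      rw [integral_finsetSum _ fun i _ ↦ integrable_cartanCubic_pow_mul_coord_mul_cartanGrad j i]
      exact Finset.sum_congr rfl fun i _ ↦
        integral_cartanCubic_pow_mul_cartanGrad_mul_coord j i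
    _ = ∫ y, ∑ i, (j * (cartanCubic y ^ (j - 1) * cartanGrad y i ^ 2) +
        cartanCubic y ^ j * cartanHessDiag y i) * exp (-‖y‖ ^ 2 / 2) := by
      rw [integral_finsetSum _ fun i _ ↦ integrable_cartanCubic_pow_mul_cartanGrad_deriv j i]
    _ = _ := by
      congr with y
      rw [← Finset.sum_mul, Finset.sum_add_distrib, ← Finset.mul_sum, ← Finset.mul_sum,
        ← Finset.mul_sum, sum_cartanGrad_sq, sum_cartanHessDiag]
      ring

/-- The surface measure of the unit sphere in `ℝ⁵`. -/
abbrev sphereMeasure : Measure (sphere (0 : EuclideanSpace ℝ (Fin 5)) 1) := volume.toSphere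

lemma integral_sphere_cartanCubic_pow_succ (j : ℕ) :
    (j + 3) * ∫ x, cartanCubic x.1 ^ (j + 2) ∂sphereMeasure =
      (j + 1) * ∫ x, cartanCubic x.1 ^ j ∂sphereMeasure := by
  have key := integral_cartanCubic_pow_succ_mul_gaussian (j + 1)
  rw [integral_homogeneous_mul_gaussian (k := 3 * j + 4 + 2)
      (g := fun y ↦ 3 * cartanCubic y ^ (j + 1 + 1)) fun r y ↦ by rw [cartanCubic_smul]; ring,
    integral_homogeneous_mul_gaussian (k := 3 * j + 4)
      (g := fun y ↦ ((j + 1 : ℕ) : ℝ) * (cartanCubic y ^ (j + 1 - 1) * (9 * ‖y‖ ^ 4)))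
      fun r y ↦ by
        rw [cartanCubic_smul, norm_smul, norm_eq_abs, mul_pow |r|,
          Even.pow_abs (n := 4) ⟨2, rfl⟩, Nat.add_sub_cancel]
        ring, ← add_assoc, gaussianRadialMoment_add_two, ← mul_assoc] at key
  have key' := mul_right_cancel₀ (gaussianRadialMoment_pos _).ne' key
  simp only [norm_eq_of_mem_sphere, integral_const_mul, integral_mul_const,
    finrank_euclideanSpace, Fintype.card_fin, Nat.add_sub_cancel] at key'
  push_cast at key'
  linarith

lemma integral_sphere_cartanCubic : ∫ x, cartanCubic x.1 ∂sphereMeasure = 0 := by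
  have key := integral_cartanCubic_pow_succ_mul_gaussian 0
  rw [integral_homogeneous_mul_gaussian (k := 3)
      (g := fun y ↦ 3 * cartanCubic y ^ (0 + 1)) fun r y ↦ by rw [cartanCubic_smul]; ring] at key
  simpa [integral_const_mul, (gaussianRadialMoment_pos _).ne'] using key

end CartanMoments

section MomentDetermined

open Polynomial

lemma integrable_pow_of_measure_Icc_compl_eq_zero {μ : Measure ℝ} [IsFiniteMeasure μ] {a b : ℝ}
    (hμ : μ (Set.Icc a b)ᶜ = 0) {f : ℝ → ℝ} (hf : Continuous f) : Integrable f μ := by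
  obtain ⟨C, hC⟩ := isCompact_Icc.exists_bound_of_continuousOn (hf.continuousOn (s := Set.Icc a b))
  refine .of_bound hf.aestronglyMeasurable C ?_
  filter_upwards [mem_ae_iff.2 hμ] with x hx using hC x hx

/-- A compactly supported finite measure on the line is determined by its moments. -/
lemma measure_ext_of_forall_integral_pow_eq {μ ν : Measure ℝ} [IsFiniteMeasure μ]
    [IsFiniteMeasure ν] {a b : ℝ} (hμ : μ (Set.Icc a b)ᶜ = 0) (hν : ν (Set.Icc a b)ᶜ = 0)
    (h : ∀ n : ℕ, ∫ x, x ^ n ∂μ = ∫ x, x ^ n ∂ν) : μ = ν := by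
  have hpoly (p : ℝ[X]) : ∫ x, p.eval x ∂μ = ∫ x, p.eval x ∂ν := by
    simp only [eval_eq_sum_range]
    rw [integral_finsetSum _ fun i _ ↦ integrable_pow_of_measure_Icc_compl_eq_zero hμ
        (by fun_prop),
      integral_finsetSum _ fun i _ ↦ integrable_pow_of_measure_Icc_compl_eq_zero hν
        (by fun_prop)]
    simp only [integral_const_mul, h]
  have hclose (f : BoundedContinuousFunction ℝ ℝ) (p : ℝ[X]) {ε : ℝ}
      (hp : ∀ x ∈ Set.Icc a b, |p.eval x - f x| < ε) (ρ : Measure ℝ) [IsFiniteMeasure ρ]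
      (hρ : ρ (Set.Icc a b)ᶜ = 0) :
      |∫ x, p.eval x ∂ρ - ∫ x, f x ∂ρ| ≤ ε * ρ.real Set.univ := by
    rw [← integral_sub (integrable_pow_of_measure_Icc_compl_eq_zero hρ (by fun_prop))
      (integrable_pow_of_measure_Icc_compl_eq_zero hρ f.continuous)]
    have hae : ∀ᵐ x ∂ρ, ‖p.eval x - f x‖ ≤ ε := by
      filter_upwards [mem_ae_iff.2 hρ] with x hx using (hp x hx).le
    exact norm_integral_le_of_norm_le_const hae
  refine ext_of_forall_integral_eq_of_IsFiniteMeasure (μ := μ) (ν := ν) fun f ↦ ?_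
  refine eq_of_forall_dist_le fun ε hε ↦ ?_
  have hK : 0 < μ.real Set.univ + ν.real Set.univ + 1 := by positivity
  obtain ⟨p, hp⟩ := exists_polynomial_near_of_continuousOn a b f f.continuous.continuousOn
    (ε / (μ.real Set.univ + ν.real Set.univ + 1)) (by positivity)
  have h1 := abs_le.1 (hclose f p hp μ hμ)
  have h2 := abs_le.1 (hclose f p hp ν hν)
  rw [hpoly p] at h1
  have h3 : ε / (μ.real Set.univ + ν.real Set.univ + 1) * μ.real Set.univ +
      ε / (μ.real Set.univ + ν.real Set.univ + 1) * ν.real Set.univ ≤ ε := by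
    rw [← mul_add, div_mul_eq_mul_div, div_le_iff₀ hK]
    nlinarith
  rw [dist_eq, abs_le]
  constructor <;> linarith [h1.1, h1.2, h2.1, h2.2]

end MomentDetermined

section CartanLaw

open Metric

/-- On the unit sphere of `ℝ⁵`, the Cartan cubic is uniformly distributed on `[-1, 1]`. -/
lemma map_cartanCubic_sphereMeasure :
    sphereMeasure.map (fun x ↦ cartanCubic x.1) =
      ENNReal.ofReal (sphereMeasure.real Set.univ / 2) •
        (volume.restrict (Set.Icc (-1 : ℝ) 1)) := by
  have hcont : Continuous fun x : sphere (0 : EuclideanSpace ℝ (Fin 5)) 1 ↦ cartanCubic x.1 :=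
    continuous_cartanCubic.comp continuous_subtype_val
  obtain ⟨M, hM⟩ := isCompact_univ.exists_bound_of_continuousOn
    (hcont.continuousOn (s := Set.univ))
  have : IsFiniteMeasure (ENNReal.ofReal (sphereMeasure.real Set.univ / 2) •
      (volume.restrict (Set.Icc (-1 : ℝ) 1))) := Measure.smul_finite _ ENNReal.ofReal_ne_top
  have hmap (n : ℕ) : ∫ x, x ^ n ∂(sphereMeasure.map fun x ↦ cartanCubic x.1) =
      ∫ x, cartanCubic x.1 ^ n ∂sphereMeasure :=
    integral_map hcont.aemeasurable (by fun_prop)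
  have hunif (n : ℕ) : ∫ x, x ^ n ∂(ENNReal.ofReal (sphereMeasure.real Set.univ / 2) •
      (volume.restrict (Set.Icc (-1 : ℝ) 1))) =
      sphereMeasure.real Set.univ / 2 * ((1 - (-1) ^ (n + 1)) / (n + 1)) := by
    rw [integral_smul_measure, integral_Icc_eq_integral_Ioc,
      ← intervalIntegral.integral_of_le (by norm_num), integral_pow, one_pow,
      ENNReal.toReal_ofReal (by positivity), smul_eq_mul]
  refine measure_ext_of_forall_integral_pow_eq (a := -max M 1) (b := max M 1) ?_ ?_ fun n ↦ ?_
  · rw [Measure.map_apply hcont.measurable measurableSet_Icc.compl]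
    convert measure_empty (μ := sphereMeasure)
    exact Set.eq_empty_of_forall_notMem fun x hx ↦
      hx (abs_le.1 ((hM x (Set.mem_univ x)).trans (le_max_left _ _)))
  · have hsub : Set.Icc (-1 : ℝ) 1 ⊆ Set.Icc (-max M 1) (max M 1) :=
      Set.Icc_subset_Icc (neg_le_neg (le_max_right M 1)) (le_max_right M 1)
    rw [Measure.smul_apply, Measure.restrict_apply measurableSet_Icc.compl,
      (Set.disjoint_compl_left_iff_subset.2 hsub).inter_eq, measure_empty, smul_zero]
  · rw [hmap, hunif]
    induction n using Nat.twoStepInduction with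
    | zero => simp; ring
    | one => simp [integral_sphere_cartanCubic]
    | more n ih _ =>
      have h := integral_sphere_cartanCubic_pow_succ n
      rw [ih] at h
      have h3 : (n : ℝ) + 3 ≠ 0 := by positivity
      have h1 : (n : ℝ) + 1 ≠ 0 := by positivity
      rw [← mul_right_inj' h3, h]
      push_cast
      rw [show (n : ℝ) + 2 + 1 = n + 3 by ring]
      field_simp
      ring

lemma sphereMeasure_cartanCubic_le (c : ℝ) :
    sphereMeasure.real {x | cartanCubic x.1 ≤ c} =
      sphereMeasure.real Set.univ * (max (min 1 c + 1) 0 / 2) := by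
  have hcont : Continuous fun x : sphere (0 : EuclideanSpace ℝ (Fin 5)) 1 ↦ cartanCubic x.1 :=
    continuous_cartanCubic.comp continuous_subtype_val
  have h : sphereMeasure {x | cartanCubic x.1 ≤ c} =
      (sphereMeasure.map fun x ↦ cartanCubic x.1) (Set.Iic c) := by
    rw [Measure.map_apply hcont.measurable measurableSet_Iic]
    rfl
  rw [measureReal_def, h, map_cartanCubic_sphereMeasure, Measure.smul_apply,
    Measure.restrict_apply measurableSet_Iic, Set.inter_comm,
    ← Set.Ici_inter_Iic,
    Set.inter_assoc, Set.Iic_inter_Iic, Set.Ici_inter_Iic, Real.volume_Icc, smul_eq_mul,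
    ENNReal.toReal_mul, ENNReal.toReal_ofReal (by positivity), ENNReal.toReal_ofReal',
    sub_neg_eq_add]
  ring

end CartanLaw

section GaussianDensity

open scoped RealInnerProductSpace
open Module

variable (E : Type*) [NormedAddCommGroup E] [InnerProductSpace ℝ E] [FiniteDimensional ℝ E]
  [MeasurableSpace E] [BorelSpace E]

lemma integral_gaussian_mul_cexp_inner (t : E) :
    ∫ y : E, (exp (-‖y‖ ^ 2 / 2) : ℂ) * Complex.exp (⟪y, t⟫ * Complex.I) =
      (∫ y : E, exp (-‖y‖ ^ 2 / 2) : ℝ) * Complex.exp (-‖t‖ ^ 2 / 2) := by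
  have h1 := GaussianFourier.integral_cexp_neg_mul_sq_norm_add (V := E) (b := 1 / 2)
    (by norm_num) Complex.I t
  have h0 := GaussianFourier.integral_cexp_neg_mul_sq_norm_add (V := E) (b := 1 / 2)
    (by norm_num) 0 t
  have e0 : ((∫ y : E, exp (-‖y‖ ^ 2 / 2) : ℝ) : ℂ) = (π / (1 / 2)) ^ (finrank ℝ E / 2 : ℂ) := by
    rw [← integral_complex_ofReal]
    simp only [zero_mul, add_zero, ne_eq, OfNat.ofNat_ne_zero, not_false_eq_true, zero_pow,
      zero_div, Complex.exp_zero, mul_one] at h0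
    rw [← h0]
    congr with y
    push_cast
    ring_nf
  rw [e0]
  convert h1 using 1
  · congr with y
    push_cast
    rw [← Complex.exp_add, real_inner_comm]
    ring_nf
  · rw [Complex.I_sq]
    ring_nf

lemma integrable_exp_neg_sq_norm_div_two : Integrable fun y : E ↦ exp (-‖y‖ ^ 2 / 2) := by
  have h := (GaussianFourier.integrable_cexp_neg_mul_sq_norm_add (V := E) (b := 1 / 2)
    (by norm_num) 0 0).re
  refine h.congr (.of_forall fun y ↦ ?_)
  have : (-(1 / 2) * (‖y‖ : ℂ) ^ 2 + 0 * ((⟪(0 : E), y⟫ : ℝ) : ℂ)) =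
    ((-‖y‖ ^ 2 / 2 : ℝ) : ℂ) := by
    push_cast
    ring
  simp only [this, ← Complex.ofReal_exp, RCLike.re_eq_complex_re, Complex.ofReal_re]

lemma integral_exp_neg_sq_norm_div_two_pos : 0 < ∫ y : E, exp (-‖y‖ ^ 2 / 2) :=
  integral_exp_pos (integrable_exp_neg_sq_norm_div_two E)

lemma stdGaussian_eq_withDensity : stdGaussian E = (volume : Measure E).withDensity
    fun y ↦ ENNReal.ofReal (exp (-‖y‖ ^ 2 / 2) / ∫ z : E, exp (-‖z‖ ^ 2 / 2)) := by
  have hZ := integral_exp_neg_sq_norm_div_two_pos E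
  have : IsFiniteMeasure ((volume : Measure E).withDensity
      fun y ↦ ENNReal.ofReal (exp (-‖y‖ ^ 2 / 2) / ∫ z : E, exp (-‖z‖ ^ 2 / 2))) :=
    isFiniteMeasure_withDensity_ofReal
      ((integrable_exp_neg_sq_norm_div_two E).div_const _).hasFiniteIntegral
  refine Measure.ext_of_charFun (funext fun t ↦ ?_)
  rw [charFun_stdGaussian, charFun_apply, integral_withDensity_eq_integral_toReal_smul
    (by fun_prop) (.of_forall fun _ ↦ ENNReal.ofReal_lt_top)]
  have hne : ((∫ y : E, exp (-‖y‖ ^ 2 / 2) : ℝ) : ℂ) ≠ 0 := by exact_mod_cast hZ.ne'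
  rw [← mul_right_inj' hne, ← integral_gaussian_mul_cexp_inner, ← integral_const_mul]
  congr with y
  rw [ENNReal.toReal_ofReal (by positivity), Complex.real_smul, Complex.ofReal_div, ← mul_assoc,
    mul_div_cancel₀ _ hne]

lemma stdGaussian_absolutelyContinuous : stdGaussian E ≪ volume := by
  rw [stdGaussian_eq_withDensity]
  exact withDensity_absolutelyContinuous _ _

lemma stdGaussian_real_eq {C : Set E} (hC : MeasurableSet C) : (stdGaussian E).real C =
    (∫ y, C.indicator 1 y * exp (-‖y‖ ^ 2 / 2)) / ∫ y : E, exp (-‖y‖ ^ 2 / 2) := by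
  have hZ := integral_exp_neg_sq_norm_div_two_pos E
  rw [← integral_indicator_one hC]
  conv_lhs => rw [stdGaussian_eq_withDensity]
  rw [integral_withDensity_eq_integral_toReal_smul
    (by fun_prop) (.of_forall fun _ ↦ ENNReal.ofReal_lt_top), ← integral_div]
  congr with y
  rw [ENNReal.toReal_ofReal (by positivity), smul_eq_mul]
  ring

lemma stdGaussian_neg_set {C : Set E} (hC : MeasurableSet C) :
    stdGaussian E (-C) = stdGaussian E C := by
  have h : (stdGaussian E).map (LinearIsometryEquiv.neg ℝ : E ≃ₗᵢ[ℝ] E) = stdGaussian E :=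
    stdGaussian_map _
  conv_rhs => rw [← h, Measure.map_apply (by fun_prop) hC]
  rfl

end GaussianDensity

section GaussianSublevel

open Metric Module

lemma stdGaussian_real_eq_polar {E : Type*} [NormedAddCommGroup E] [InnerProductSpace ℝ E]
    [FiniteDimensional ℝ E] [MeasurableSpace E] [BorelSpace E] [Nontrivial E] {C : Set E}
    (hC : MeasurableSet C) : (stdGaussian E).real C =
      (∫ r in Set.Ioi (0 : ℝ), r ^ (finrank ℝ E - 1) *
        ((volume : Measure E).toSphere.real {x | r • x.1 ∈ C} * exp (-r ^ 2 / 2))) /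
      ((volume : Measure E).toSphere.real Set.univ *
        gaussianRadialMoment (finrank ℝ E - 1)) := by
  have hden : ∫ y : E, exp (-‖y‖ ^ 2 / 2) = (volume : Measure E).toSphere.real Set.univ *
      gaussianRadialMoment (finrank ℝ E - 1) := by
    simpa using integral_homogeneous_mul_gaussian (μ := (volume : Measure E)) (g := fun _ ↦ 1)
      (k := 0) (by simp)
  have hint : Integrable (fun y : E ↦ C.indicator 1 y * exp (-‖y‖ ^ 2 / 2)) := by
    refine ((integrable_exp_neg_sq_norm_div_two E).indicator hC).congr (.of_forall fun y ↦ ?_)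
    by_cases hy : y ∈ C <;> simp [hy]
  rw [stdGaussian_real_eq E hC, hden, integral_eq_integral_toSphere_prod, integral_prod_symm _
    ((integrable_iff_integrable_toSphere_prod _ _).1 hint), ← integral_volumeIoiPow _ fun r : ℝ ↦
      (volume : Measure E).toSphere.real {x | r • x.1 ∈ C} * exp (-r ^ 2 / 2)]
  congr with r
  have hm : MeasurableSet {x : sphere (0 : E) 1 | r.1 • x.1 ∈ C} :=
    (continuous_subtype_val.const_smul r.1).measurable hC
  rw [← integral_indicator_one hm, ← integral_mul_const]
  congr with x
  rw [norm_smul, norm_eq_of_mem_sphere, mul_one, norm_eq_abs, sq_abs]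
  rfl

lemma smul_mem_cartanSublevel_iff {a r : ℝ} (ha : 0 < a) (hr : 0 < r)
    (x : sphere (0 : EuclideanSpace ℝ (Fin 5)) 1) : r • x.1 ∈ cartanSublevel a ↔
      r ≤ a ∧ cartanCubic x.1 ≤ (a ^ 3 - 3 * r ^ 2 * a) / (2 * r ^ 3) := by
  rw [cartanSublevel, Set.mem_ofPred_eq, forall_cartanMatrix_le_iff, norm_smul,
    norm_eq_of_mem_sphere, mul_one, norm_eq_abs, sq_abs, cartanCubic_smul,
    le_div_iff₀ (by positivity), pow_le_pow_iff_left₀ hr.le ha.le two_ne_zero]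
  refine ⟨fun h ↦ ⟨h.2.1, by linarith [h.2.2]⟩, fun h ↦ ⟨ha.le, h.1, by linarith [h.2]⟩⟩

lemma sphereMeasure_smul_mem_cartanSublevel_of_le_half {a r : ℝ} (ha : 0 < a) (hr : 0 < r)
    (hra : r ≤ a / 2) :
    sphereMeasure.real {x | r • x.1 ∈ cartanSublevel a} = sphereMeasure.real Set.univ := by
  have h1 : 1 ≤ (a ^ 3 - 3 * r ^ 2 * a) / (2 * r ^ 3) := by
    rw [le_div_iff₀ (by positivity)]
    nlinarith [mul_nonneg (by linarith : 0 ≤ a - 2 * r) (sq_nonneg (a + r))]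
  have hset : {x : sphere (0 : EuclideanSpace ℝ (Fin 5)) 1 | r • x.1 ∈ cartanSublevel a} =
      {x | cartanCubic x.1 ≤ (a ^ 3 - 3 * r ^ 2 * a) / (2 * r ^ 3)} := by
    ext x
    simp only [Set.mem_ofPred_eq, smul_mem_cartanSublevel_iff ha hr,
      (by linarith : r ≤ a), true_and]
  rw [hset, sphereMeasure_cartanCubic_le, min_eq_left h1]
  norm_num

lemma sphereMeasure_smul_mem_cartanSublevel_of_half_le {a r : ℝ} (ha : 0 < a)
    (hra : a / 2 ≤ r) (hra' : r ≤ a) :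
    r ^ 4 * sphereMeasure.real {x | r • x.1 ∈ cartanSublevel a} = sphereMeasure.real Set.univ *
      (r ^ 4 / 2 + (a ^ 3 * r - 3 * a * r ^ 3) / 4) := by
  have hr : 0 < r := by linarith
  have h1 : (a ^ 3 - 3 * r ^ 2 * a) / (2 * r ^ 3) ≤ 1 := by
    rw [div_le_iff₀ (by positivity)]
    nlinarith [mul_nonneg (by linarith : 0 ≤ 2 * r - a) (sq_nonneg (a + r))]
  have h2 : 0 ≤ (a ^ 3 - 3 * r ^ 2 * a) / (2 * r ^ 3) + 1 := by
    rw [← neg_le_iff_add_nonneg, le_div_iff₀ (by positivity)]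
    nlinarith [mul_nonneg (by linarith : 0 ≤ a + 2 * r) (sq_nonneg (a - r))]
  have hset : {x : sphere (0 : EuclideanSpace ℝ (Fin 5)) 1 | r • x.1 ∈ cartanSublevel a} =
      {x | cartanCubic x.1 ≤ (a ^ 3 - 3 * r ^ 2 * a) / (2 * r ^ 3)} := by
    ext x
    simp only [Set.mem_ofPred_eq, smul_mem_cartanSublevel_iff ha hr, hra', true_and]
  rw [hset, sphereMeasure_cartanCubic_le, min_eq_right h1, max_eq_left h2]
  field_simp
  ring

lemma sphereMeasure_smul_mem_cartanSublevel_of_lt {a r : ℝ} (ha : 0 < a) (hra : a < r) :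
    sphereMeasure.real {x | r • x.1 ∈ cartanSublevel a} = 0 := by
  have hset : {x : sphere (0 : EuclideanSpace ℝ (Fin 5)) 1 | r • x.1 ∈ cartanSublevel a} = ∅ := by
    ext x
    simp only [Set.mem_ofPred_eq, smul_mem_cartanSublevel_iff ha (ha.trans hra),
      Set.mem_empty_iff_false, iff_false]
    exact fun h ↦ (h.1.trans_lt hra).false
  rw [hset, measureReal_empty]

lemma setIntegral_Ioi_cartanSublevel {a : ℝ} (ha : 0 < a) :
    ∫ r in Set.Ioi (0 : ℝ), r ^ 4 *
        (sphereMeasure.real {x | r • x.1 ∈ cartanSublevel a} * exp (-r ^ 2 / 2)) =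
      sphereMeasure.real Set.univ * ((∫ r in (0)..(a / 2), r ^ 4 * exp (-r ^ 2 / 2)) +
        ∫ r in (a / 2)..a, (r ^ 4 / 2 + (a ^ 3 * r - 3 * a * r ^ 3) / 4) * exp (-r ^ 2 / 2)) := by
  set f : ℝ → ℝ := fun r ↦ r ^ 4 *
    (sphereMeasure.real {x | r • x.1 ∈ cartanSublevel a} * exp (-r ^ 2 / 2)) with hf
  have e1 : Set.EqOn f (fun r ↦ sphereMeasure.real Set.univ * (r ^ 4 * exp (-r ^ 2 / 2)))
      (Set.Ioc 0 (a / 2)) := by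
    intro r hr
    simp only [hf, sphereMeasure_smul_mem_cartanSublevel_of_le_half ha hr.1 hr.2]
    ring
  have e2 : Set.EqOn f (fun r ↦ sphereMeasure.real Set.univ *
      ((r ^ 4 / 2 + (a ^ 3 * r - 3 * a * r ^ 3) / 4) * exp (-r ^ 2 / 2)))
      (Set.Ioc (a / 2) a) := by
    intro r hr
    simp only [hf]
    rw [← mul_assoc, sphereMeasure_smul_mem_cartanSublevel_of_half_le ha hr.1.le hr.2, mul_assoc]
  have i1 : IntegrableOn f (Set.Ioc 0 (a / 2)) := by
    rw [integrableOn_congr_fun e1 measurableSet_Ioc]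
    exact (Continuous.integrableOn_Icc (by fun_prop)).mono_set Set.Ioc_subset_Icc_self
  have i2 : IntegrableOn f (Set.Ioc (a / 2) a) := by
    rw [integrableOn_congr_fun e2 measurableSet_Ioc]
    exact (Continuous.integrableOn_Icc (by fun_prop)).mono_set Set.Ioc_subset_Icc_self
  have hsupp : ∫ r in Set.Ioi (0 : ℝ), f r = ∫ r in Set.Ioc 0 a, f r := by
    refine setIntegral_eq_of_subset_of_forall_sdiff_eq_zero measurableSet_Ioi
      Set.Ioc_subset_Ioi_self fun r hr ↦ ?_
    have : a < r := not_le.1 fun h ↦ hr.2 ⟨hr.1, h⟩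
    simp [hf, sphereMeasure_smul_mem_cartanSublevel_of_lt ha this]
  rw [hsupp, ← Set.Ioc_union_Ioc_eq_Ioc (by positivity : 0 ≤ a / 2) (by linarith),
    setIntegral_union (Set.Ioc_disjoint_Ioc_of_le le_rfl) measurableSet_Ioc i1 i2,
    setIntegral_congr_fun measurableSet_Ioc e1, setIntegral_congr_fun measurableSet_Ioc e2,
    intervalIntegral.integral_of_le (by positivity), intervalIntegral.integral_of_le (by linarith),
    integral_const_mul, integral_const_mul, mul_add]

end GaussianSublevel

section Primitives

open intervalIntegral

lemma gaussianRadialMoment_zero : gaussianRadialMoment 0 = √(2 * π) / 2 := by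
  have h := integral_gaussian_Ioi (1 / 2)
  rw [show π / (1 / 2) = 2 * π by ring] at h
  rw [← h, gaussianRadialMoment]
  congr with r
  ring_nf

lemma hasDerivAt_exp_neg_sq_div_two (x : ℝ) :
    HasDerivAt (fun r : ℝ ↦ exp (-r ^ 2 / 2)) (-x * exp (-x ^ 2 / 2)) x := by
  refine (((hasDerivAt_pow 2 x).neg.div_const 2).exp).congr_deriv ?_
  push_cast
  simp only [Pi.neg_apply]
  ring

lemma hasDerivAt_integral_exp_neg_sq_div_two (x : ℝ) :
    HasDerivAt (fun r : ℝ ↦ ∫ u in (0)..r, exp (-u ^ 2 / 2)) (exp (-x ^ 2 / 2)) x :=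
  integral_hasDerivAt_right (Continuous.intervalIntegrable (by fun_prop) _ _)
    (Continuous.stronglyMeasurableAtFilter (by fun_prop) _ _)
    (Continuous.continuousAt (by fun_prop))

lemma integral_pow_four_mul_exp (b : ℝ) :
    ∫ r in (0)..b, r ^ 4 * exp (-r ^ 2 / 2) =
      3 * (∫ u in (0)..b, exp (-u ^ 2 / 2)) - (b ^ 3 + 3 * b) * exp (-b ^ 2 / 2) := by
  rw [integral_eq_sub_of_hasDerivAt (f := fun r ↦ 3 * (∫ u in (0)..r, exp (-u ^ 2 / 2)) -
    (r ^ 3 + 3 * r) * exp (-r ^ 2 / 2)) (fun x _ ↦ ?_)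
    (Continuous.intervalIntegrable (by fun_prop) _ _)]
  · simp
  · refine (((hasDerivAt_integral_exp_neg_sq_div_two x).const_mul 3).sub
      (((hasDerivAt_pow 3 x).add ((hasDerivAt_id x).const_mul 3)).mul
        (hasDerivAt_exp_neg_sq_div_two x))).congr_deriv ?_
    simp only [Pi.add_apply, id]
    push_cast
    ring

lemma integral_cap_mul_exp (a : ℝ) :
    ∫ r in (a / 2)..a, (r ^ 4 / 2 + (a ^ 3 * r - 3 * a * r ^ 3) / 4) * exp (-r ^ 2 / 2) =
      3 / 2 * (∫ u in (0)..a, exp (-u ^ 2 / 2)) - 3 / 2 * (∫ u in (0)..(a / 2), exp (-u ^ 2 / 2))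
        + (a ^ 3 / 8 - 3 / 4 * a) * exp (-(a / 2) ^ 2 / 2) := by
  rw [integral_eq_sub_of_hasDerivAt (f := fun r ↦ 3 / 2 * (∫ u in (0)..r, exp (-u ^ 2 / 2)) +
    (-(r ^ 3 + 3 * r) / 2 - a ^ 3 / 4 + 3 / 4 * a * (r ^ 2 + 2)) * exp (-r ^ 2 / 2))
    (fun x _ ↦ ?_) (Continuous.intervalIntegrable (by fun_prop) _ _)]
  · ring
  · have hp : HasDerivAt (fun r ↦ -(r ^ 3 + 3 * r) / 2 - a ^ 3 / 4 + 3 / 4 * a * (r ^ 2 + 2))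
        (-(3 * x ^ 2 + 3) / 2 + 3 / 4 * a * (2 * x)) x := by
      refine ((((((hasDerivAt_pow 3 x).add ((hasDerivAt_id x).const_mul 3)).neg).div_const
        2).sub_const _).add (((hasDerivAt_pow 2 x).add_const 2).const_mul
          (3 / 4 * a))).congr_deriv ?_
      push_cast
      ring
    refine (((hasDerivAt_integral_exp_neg_sq_div_two x).const_mul (3 / 2)).add
      (hp.mul (hasDerivAt_exp_neg_sq_div_two x))).congr_deriv ?_
    ring

lemma stdNormalCDF_eq (t : ℝ) :
    stdNormalCDF t = 1 / 2 + (∫ u in (0)..t, exp (-u ^ 2 / 2)) / √(2 * π) := by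
  have hint : Integrable fun u : ℝ ↦ exp (-u ^ 2 / 2) := by
    simpa using integrable_exp_neg_sq_norm_div_two ℝ
  have h0 : ∫ u in Set.Iic (0 : ℝ), exp (-u ^ 2 / 2) = √(2 * π) / 2 := by
    have := integral_comp_neg_Iic 0 fun u : ℝ ↦ exp (-u ^ 2 / 2)
    simp only [neg_zero, neg_sq] at this
    rw [this, ← gaussianRadialMoment_zero, gaussianRadialMoment]
    simp
  have h := integral_Iic_sub_Iic (a := 0) (b := t) hint.integrableOn hint.integrableOn
  have hs : √(2 * π) ≠ 0 := by positivity
  rw [stdNormalCDF, MeasureTheory.integral_const_mul, ← h, h0]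
  field_simp
  ring

end Primitives

lemma measurableSet_cartanSublevel (a : ℝ) : MeasurableSet (cartanSublevel a) :=
  (isClosed_cartanSublevel a).measurableSet

lemma sphereMeasure_real_univ_pos : 0 < sphereMeasure.real Set.univ := by
  rw [sphereMeasure, Measure.toSphere_real_apply_univ]
  have : 0 < (volume : Measure (EuclideanSpace ℝ (Fin 5))).real (Metric.ball 0 1) :=
    ENNReal.toReal_pos (Metric.measure_ball_pos _ _ one_pos).ne' measure_ball_lt_top.ne
  simpa using this

lemma stdGaussian_cartanSublevel (a : ℝ) :
    (stdGaussian (EuclideanSpace ℝ (Fin 5)) (cartanSublevel a)).toReal =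
      if 0 < a then stdNormalCDF a + stdNormalCDF (a / 2) + 3 * stdNormalCDF'' (a / 2) - 1
      else 0 := by
  split_ifs with ha
  · rw [← measureReal_def, stdGaussian_real_eq_polar (measurableSet_cartanSublevel a)]
    have hdim : Module.finrank ℝ (EuclideanSpace ℝ (Fin 5)) - 1 = 4 := by simp
    have hJ : gaussianRadialMoment 4 = 3 * (√(2 * π) / 2) := by
      rw [gaussianRadialMoment_add_two 2, gaussianRadialMoment_add_two 0,
        gaussianRadialMoment_zero]
      norm_num
    rw [hdim, setIntegral_Ioi_cartanSublevel ha,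
      mul_div_mul_left _ _ sphereMeasure_real_univ_pos.ne', hJ, integral_pow_four_mul_exp,
      integral_cap_mul_exp, stdNormalCDF_eq, stdNormalCDF_eq, stdNormalCDF'']
    have hs : √(2 * π) ≠ 0 := by positivity
    field_simp
    ring
  · have hsub : cartanSublevel a ⊆ {0} := by
      intro y hy
      rw [cartanSublevel, Set.mem_ofPred_eq, forall_cartanMatrix_le_iff] at hy
      have ha0 : a = 0 := le_antisymm (not_lt.1 ha) hy.1
      have : ‖y‖ ^ 2 = 0 := le_antisymm (by simpa [ha0] using hy.2.1) (sq_nonneg _)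
      simpa using this
    have h0 : (volume : Measure (EuclideanSpace ℝ (Fin 5))) {0} = 0 := measure_singleton 0
    rw [measure_mono_null hsub (stdGaussian_absolutelyContinuous _ h0), ENNReal.toReal_zero]

lemma ae_pi_sphere {U : Measure (Fin 3 → ℝ)} [IsProbabilityMeasure U]
    (hU : U {x : Fin 3 → ℝ | ∑ a, x a ^ 2 = 1}ᶜ = 0) (n : ℕ) :
    ∀ᵐ x ∂(Measure.pi fun _ : Fin n ↦ U), ∀ i, ∑ a, x i a ^ 2 = 1 :=
  eventually_all.2 fun i ↦ (Measure.tendsto_eval_ae_ae (i := i)).eventually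
    (p := fun y : Fin 3 → ℝ ↦ ∑ a, y a ^ 2 = 1) (mem_ae_iff.2 hU)

/-- Corollary 5.1(ii), case `p = 3`, one-sided statistics.
Under uniformity on `S²`, both `T_+^{(n)} = √n(3λ̂_{n1}-1)` and `T_-^{(n)} = -√n(3λ̂_{n3}-1)`
converge in distribution to the law with cdf
`ℓ ↦ {Φ(√5 ℓ) + Φ(√5 ℓ/2) + 3Φ''(√5 ℓ/2) - 1} 1[ℓ > 0]` (this cdf is continuous, so cdf
convergence holds at every point). -/
theorem sphere_onesided_eigenvalue_statistics_null_limit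
    (U : Measure (Fin 3 → ℝ)) [IsProbabilityMeasure U]
    (hUsphere : U {x : Fin 3 → ℝ | ∑ a, x a ^ 2 = 1}ᶜ = 0)
    (hUrot : ∀ O : Matrix (Fin 3) (Fin 3) ℝ, O * Oᵀ = 1 →
      Measure.map (fun x => O.mulVec x) U = U) :
    (∀ ℓ : ℝ,
      Tendsto (fun n => ((Measure.pi (fun _ : Fin n => U))
          {x | Real.sqrt n * (3 * maxEig (Sn 3 n x) - 1) ≤ ℓ}).toReal) atTop
        (𝓝 (if 0 < ℓ then
          stdNormalCDF (Real.sqrt 5 * ℓ) + stdNormalCDF (Real.sqrt 5 * ℓ / 2)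
            + 3 * stdNormalCDF'' (Real.sqrt 5 * ℓ / 2) - 1 else 0))) ∧
    (∀ ℓ : ℝ,
      Tendsto (fun n => ((Measure.pi (fun _ : Fin n => U))
          {x | -(Real.sqrt n * (3 * minEig (Sn 3 n x) - 1)) ≤ ℓ}).toReal) atTop
        (𝓝 (if 0 < ℓ then
          stdNormalCDF (Real.sqrt 5 * ℓ) + stdNormalCDF (Real.sqrt 5 * ℓ / 2)
            + 3 * stdNormalCDF'' (Real.sqrt 5 * ℓ / 2) - 1 else 0))) := by
  have h5 (ℓ : ℝ) : 0 < √5 * ℓ ↔ 0 < ℓ := mul_pos_iff_of_pos_left (by positivity)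
  have hnull (C : Set (EuclideanSpace ℝ (Fin 5))) (hC : Convex ℝ C) :
      stdGaussian (EuclideanSpace ℝ (Fin 5)) (frontier C) = 0 :=
    stdGaussian_absolutelyContinuous _ (hC.addHaar_frontier volume)
  refine ⟨fun ℓ ↦ ?_, fun ℓ ↦ ?_⟩
  · have h := tendsto_measure_featureSum hUsphere hUrot (measurableSet_cartanSublevel (√5 * ℓ))
      (hnull _ (convex_cartanSublevel _))
    simp only [stdGaussian_cartanSublevel, h5] at h
    refine h.congr' ?_
    filter_upwards [eventually_ne_atTop 0] with n hn
    refine congrArg ENNReal.toReal (measure_congr ?_)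
    filter_upwards [ae_pi_sphere hUsphere n] with x hx
    exact propext (sqrt_mul_maxEig_le_iff hn hx ℓ).symm
  · have h := tendsto_measure_featureSum hUsphere hUrot
      (measurableSet_cartanSublevel (√5 * ℓ)).neg (hnull _ (convex_cartanSublevel _).neg)
    simp only [stdGaussian_neg_set _ (measurableSet_cartanSublevel _),
      stdGaussian_cartanSublevel, h5] at h
    refine h.congr' ?_
    filter_upwards [eventually_ne_atTop 0] with n hn
    refine congrArg ENNReal.toReal (measure_congr ?_)
    filter_upwards [ae_pi_sphere hUsphere n] with x hx
    exact propext (neg_sqrt_mul_minEig_le_iff hn hx ℓ).symm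

end
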